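/- arXiv:1204.1440 — 4 statements merged into one kernel-verified Lean document; each statement's English description precedes it below -/
import Mathlib

section
/- For all integers n and k with 2 ≤ k ≤ n−2 (so n ≥ 4, which in particular covers n ≥ 3), the 1-super connectivity of the (n,k)-star graph satisfies κ_s^{(1)}(S_{n,k}) = n + k − 3. -/
/-!
Write `K` for the number of positions. The two kinds of edges have a common description: the
neighbours of `p` are obtained by exchanging the symbol `p₁` with any other symbol `a`, whether or
not `a` occurs in `p` (`NKStar.nb`, `NKStar.adj_iff`). A neighbour is thus determined by its first
symbol.

*Upper bound* (`NKStar.exists_isHSuperCut`). The neighbourhood of an unswap-edge `uv` has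
`(n - K - 1) + 2 (K - 1) = n + K - 3` elements. A vertex outside it and different from `u, v` has at
least two unswap-neighbours, at most one of which lies in the neighbourhood.

*Lower bound* (`NKStar.le_of_isHSuperCut`). Let `S` be a set of at most `n + K - 4` faults; any two
vertices that keep a neighbour are shown to be connected. Fixing the symbol in a position `t ≠ 1`
splits the graph into `n` copies of the `(n-1, K-1)`-star. By induction (`NKStar.join_of_card_le`)
the `(n, K)`-star survives `n - 2` faults: some copy contains no fault, and every vertex starts
`n - 1` walks into it whose possible faults are disjoint. Hence each copy with at most `n - 3`
faults is connected, and at most one copy has more faults. The other copies are connected to each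
other, since at least `n - 2` disjoint edges join any two copies (`NKStar.join_main`). Finally, an
edge inside the exceptional copy has at least `n + K - 3` vertices in its closed neighbourhood
there, each with its own neighbour in another copy, so one of these exits is free of faults
(`NKStar.escape`). For `K = 2` the bound `n - 2` is already the required one.
-/

/-- A vertex of the `(n,k)`-star graph: a `k`-permutation of `{1,…,n}`,
encoded as an injective function `Fin k → Fin n`. -/
def NKVertex (n k : ℕ) : Type := {p : Fin k → Fin n // Function.Injective p}

/-- `SwapRel p q` : `q` is obtained from `p` by swapping the first bit with the
`i`-th bit for some `i ≠ 1` (a swap-edge). -/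
def SwapRel {n k : ℕ} (p q : NKVertex n k) : Prop :=
  ∃ (hk : 0 < k) (i : Fin k), (i : ℕ) ≠ 0 ∧ q.1 = p.1 ∘ Equiv.swap ⟨0, hk⟩ i

/-- `UnswapRel p q` : `q` is obtained from `p` by replacing the first bit by a
symbol not occurring in `p` (an unswap-edge). -/
def UnswapRel {n k : ℕ} (p q : NKVertex n k) : Prop :=
  ∃ (hk : 0 < k), (∀ j : Fin k, (j : ℕ) ≠ 0 → q.1 j = p.1 j) ∧ q.1 ⟨0, hk⟩ ∉ Set.range p.1

/-- The `(n,k)`-star graph `S_{n,k}`. -/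
def nkStar (n k : ℕ) : SimpleGraph (NKVertex n k) :=
  SimpleGraph.fromRel (fun p q => SwapRel p q ∨ UnswapRel p q)

/-- `S` is an `h`-super vertex-cut of `G`: `G − S` is disconnected and every
vertex of `G − S` has degree at least `h` in `G − S`. -/
def IsHSuperCut {V : Type*} (G : SimpleGraph V) (h : ℕ) (S : Set V) : Prop :=
  ¬ (G.induce Sᶜ).Connected ∧ ∀ v ∈ Sᶜ, h ≤ (G.neighborSet v ∩ Sᶜ).ncard

/-- The `h`-super connectivity `κ_s^{(h)}(G)`: the minimum cardinality of an
`h`-super vertex-cut of `G`. -/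
noncomputable def hSuperConn {V : Type*} (G : SimpleGraph V) (h : ℕ) : ℕ :=
  sInf (Set.ncard '' {S : Set V | IsHSuperCut G h S})

namespace NKStar

open Function

variable {n k : ℕ}

instance : Finite (NKVertex n k) :=
  inferInstanceAs (Finite {p : Fin k → Fin n // Function.Injective p})

/-! ### Neighbours as exchanges of symbols -/

/-- Rename the symbols of a vertex by a permutation of the alphabet. -/
def ren (σ : Equiv.Perm (Fin n)) (p : NKVertex n k) : NKVertex n k :=
  ⟨σ ∘ p.1, σ.injective.comp p.2⟩

/-- `nb p a` exchanges the symbols `p₁` and `a`. This is the swap-neighbour when `a` occurs in `p`,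
the unswap-neighbour when it does not, and `p` itself when `a = p₁`. -/
def nb (p : NKVertex n (k + 1)) (a : Fin n) : NKVertex n (k + 1) :=
  ren (Equiv.swap (p.1 0) a) p

lemma nb_zero (p : NKVertex n (k + 1)) (a : Fin n) : (nb p a).1 0 = a := by
  simp [nb, ren]

lemma nb_of_eq (p : NKVertex n (k + 1)) {a : Fin n} {j : Fin (k + 1)} (h : p.1 j = a) :
    (nb p a).1 j = p.1 0 := by
  simp [nb, ren, h]

lemma nb_of_ne (p : NKVertex n (k + 1)) {a : Fin n} {j : Fin (k + 1)} (hj : j ≠ 0)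
    (h : p.1 j ≠ a) : (nb p a).1 j = p.1 j :=
  Equiv.swap_apply_of_ne_of_ne (fun e => hj (p.2 e)) h

lemma ext' {p q : NKVertex n k} (h : ∀ j, p.1 j = q.1 j) : p = q :=
  Subtype.ext (funext h)

lemma nb_self (p : NKVertex n (k + 1)) : nb p (p.1 0) = p :=
  ext' fun j => by simp [nb, ren]

lemma nb_nb (p : NKVertex n (k + 1)) (a : Fin n) : nb (nb p a) (p.1 0) = p :=
  ext' fun j => by
    change Equiv.swap ((nb p a).1 0) (p.1 0) (Equiv.swap (p.1 0) a (p.1 j)) = p.1 j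
    rw [nb_zero, Equiv.swap_comm a, Equiv.swap_apply_self]

lemma nb_injective (p : NKVertex n (k + 1)) : Injective (nb p) := fun a b h => by
  rw [← nb_zero p a, h, nb_zero]

/-- Vertices with the same tail differ by an unswap (or coincide). -/
lemma eq_nb_of_tail {p q : NKVertex n (k + 1)} (h : ∀ j, j ≠ 0 → q.1 j = p.1 j) :
    q = nb p (q.1 0) := by
  refine ext' fun j => ?_
  by_cases hj : j = 0
  · rw [hj, nb_zero]
  · rw [nb_of_ne p hj, h j hj]
    rw [← h j hj]
    exact fun e => hj (q.2 e)

lemma adj_iff {p q : NKVertex n (k + 1)} :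
    (nkStar n (k + 1)).Adj p q ↔ ∃ a, a ≠ p.1 0 ∧ q = nb p a := by
  have key : ∀ p q : NKVertex n (k + 1), (SwapRel p q ∨ UnswapRel p q) →
      q = nb p (q.1 0) := by
    rintro p q (⟨_, i, hi, h⟩ | ⟨_, h, -⟩)
    · refine ext' fun j => ?_
      have hq : ∀ j, q.1 j = p.1 (Equiv.swap 0 i j) := fun j => congrFun h j
      have h0 : q.1 0 = p.1 i := by rw [hq]; simp
      by_cases hj : j = 0
      · rw [hj, nb_zero]
      by_cases hji : j = i
      · subst hji
        rw [nb_of_eq p h0.symm, hq]; simp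
      · rw [nb_of_ne p hj, hq, Equiv.swap_apply_of_ne_of_ne hj hji]
        rw [h0]
        exact fun e => hji (p.2 e)
    · exact eq_nb_of_tail fun j hj => h j fun e => hj (Fin.ext e)
  rw [nkStar, SimpleGraph.fromRel_adj]
  constructor
  · rintro ⟨hne, h | h⟩
    · refine ⟨q.1 0, fun e => hne ?_, key _ _ h⟩
      rw [key _ _ h, e, nb_self]
    · have h1 := key _ _ h
      have h2 : q = nb p (q.1 0) := by
        conv_rhs => rw [h1]
        rw [nb_nb]
      refine ⟨q.1 0, fun e => hne ?_, h2⟩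
      rw [h2, e, nb_self]
  · rintro ⟨a, ha, rfl⟩
    refine ⟨fun e => ha ?_, Or.inl ?_⟩
    · rw [e, nb_zero]
    by_cases h : a ∈ Set.range p.1
    · obtain ⟨i, rfl⟩ := h
      have hi : i ≠ 0 := fun e => ha (by rw [e])
      refine Or.inl ⟨k.succ_pos, i, fun e => hi (Fin.ext e), funext fun j => ?_⟩
      change _ = p.1 (Equiv.swap 0 i j)
      by_cases hj : j = 0
      · rw [hj, nb_zero]; simp
      by_cases hji : j = i
      · subst hji
        rw [nb_of_eq p rfl]; simp
      · rw [nb_of_ne p hj fun e => hji (p.2 e), Equiv.swap_apply_of_ne_of_ne hj hji]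
    · refine Or.inr ⟨k.succ_pos, fun j hj => nb_of_ne p (fun e => hj (by rw [e]; rfl))
        fun e => h ⟨j, e⟩, ?_⟩
      have : (nb p a).1 ⟨0, k.succ_pos⟩ = a := nb_zero p a
      rwa [this]

/-! ### Walks avoiding faults -/

/-- Fewer faults than labels leave some label unused. -/
lemma exists_label {α β : Type*} [DecidableEq β] (S : Finset α) (T : Finset β) (f : α → β)
    (h : S.card < T.card) : ∃ t ∈ T, ∀ s ∈ S, f s ≠ t := by
  obtain ⟨t, ht, hn⟩ := Finset.exists_mem_notMem_of_card_lt_card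
    (lt_of_le_of_lt (Finset.card_image_le (s := S) (f := f)) h)
  exact ⟨t, ht, fun s hs e => hn (Finset.mem_image.2 ⟨s, hs, e⟩)⟩

/-- `Join X p q`: there is a walk from `p` to `q` inside `X`; as `nb p (p.1 0) = p`, steps are allowed
to stand still. -/
def Join (X : Set (NKVertex n (k + 1))) : NKVertex n (k + 1) → NKVertex n (k + 1) → Prop :=
  Relation.ReflTransGen fun p q => p ∈ X ∧ q ∈ X ∧ ∃ a, q = nb p a

lemma Join.symm {X : Set (NKVertex n (k + 1))} {p q : NKVertex n (k + 1)} (h : Join X p q) :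
    Join X q p := by
  have : Std.Symm fun p q : NKVertex n (k + 1) => p ∈ X ∧ q ∈ X ∧ ∃ a, q = nb p a :=
    ⟨by
      rintro p _ ⟨hp, hq, a, rfl⟩
      exact ⟨hq, hp, p.1 0, (nb_nb p a).symm⟩⟩
  exact Relation.ReflTransGen.stdSymm.symm _ _ h

lemma Join.trans {X : Set (NKVertex n (k + 1))} {p q r : NKVertex n (k + 1)} (h : Join X p q)
    (h' : Join X q r) : Join X p r :=
  Relation.ReflTransGen.trans h h'

lemma Join.mono {X Y : Set (NKVertex n (k + 1))} (hXY : X ⊆ Y) {p q : NKVertex n (k + 1)}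
    (h : Join X p q) : Join Y p q :=
  Relation.ReflTransGen.mono (fun _ _ ⟨a, b, c⟩ => ⟨hXY a, hXY b, c⟩) _ _ h

lemma Join.step {X : Set (NKVertex n (k + 1))} {p : NKVertex n (k + 1)} (a : Fin n)
    (hp : p ∈ X) (hq : nb p a ∈ X) : Join X p (nb p a) :=
  Relation.ReflTransGen.single ⟨hp, hq, a, rfl⟩

lemma Join.reachable {X : Set (NKVertex n (k + 1))} {p q : NKVertex n (k + 1)}
    (h : Join X p q) (hp : p ∈ X) :
    ∃ hq : q ∈ X, ((nkStar n (k + 1)).induce X).Reachable ⟨p, hp⟩ ⟨q, hq⟩ := by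
  induction h with
  | refl => exact ⟨hp, .refl _⟩
  | @tail b c _ hbc ih =>
    obtain ⟨hb, hc, a, rfl⟩ := hbc
    obtain ⟨_, hr⟩ := ih
    refine ⟨hc, ?_⟩
    by_cases ha : a = b.1 0
    · subst ha
      simpa only [nb_self] using hr
    · exact hr.trans (SimpleGraph.Adj.reachable
        (SimpleGraph.induce_adj.2 (adj_iff.2 ⟨a, ha, rfl⟩)))

/-! ### Connectivity of sub-stars -/

/-- The vertices agreeing with `x` on the positions in `F` and avoiding `S`: what the faults `S` leave
of the sub-star obtained by freezing `F`. -/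
def Sub (F : Finset (Fin (k + 1))) (S : Finset (NKVertex n (k + 1))) (x : NKVertex n (k + 1)) :
    Set (NKVertex n (k + 1)) :=
  {p | (∀ j ∈ F, p.1 j = x.1 j) ∧ p ∉ S}

lemma nb_mem_Sub {F : Finset (Fin (k + 1))} (h0 : (0 : Fin (k + 1)) ∉ F)
    {S : Finset (NKVertex n (k + 1))} {x p : NKVertex n (k + 1)} {a : Fin n}
    (hp : p ∈ Sub F S x) (ha : a ∉ F.image x.1) (hS : nb p a ∉ S) : nb p a ∈ Sub F S x := by
  refine ⟨fun j hj => ?_, hS⟩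
  rw [nb_of_ne p (fun e => h0 (e ▸ hj)), hp.1 j hj]
  rw [hp.1 j hj]
  exact fun e => ha (Finset.mem_image.2 ⟨j, hj, e⟩)

/-- In the sub-star obtained by freezing `F`, which has `n - |F|` free symbols, every vertex `x`
outside `S` reaches the copy `{p | p.1 t = i}` when no fault lies in that copy and `S` has at most
`n - |F| - 2` elements: the walks `x → (j, x t) → (x t, j) → (i, j) → (j, i)` (listing the symbols
in positions `0, t`) with different `j` meet faults in disjoint sets. -/
lemma join_copy {F : Finset (Fin (k + 1))} (h0 : (0 : Fin (k + 1)) ∉ F) {t : Fin (k + 1)}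
    (ht0 : t ≠ 0) (htF : t ∉ F) (S : Finset (NKVertex n (k + 1))) (x : NKVertex n (k + 1))
    (hx : x ∉ S) (hS : S.card + F.card + 2 ≤ n) {i : Fin n} (hi : i ∉ F.image x.1)
    (hfree : ∀ s ∈ S, s.1 t ≠ i) : ∃ y, y.1 t = i ∧ Join (Sub F S x) x y := by
  by_cases hxi : x.1 t = i
  · exact ⟨x, hxi, Relation.ReflTransGen.refl⟩
  have hxF : x.1 t ∉ F.image x.1 := fun e => by
    obtain ⟨j, hj, e⟩ := Finset.mem_image.1 e
    exact htF (x.2 e ▸ hj)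
  have hcard : S.card < ((F.image x.1)ᶜ.erase (x.1 t)).card := by
    rw [Finset.card_erase_of_mem (Finset.mem_compl.2 hxF), Finset.card_compl, Fintype.card_fin]
    have : (F.image x.1).card ≤ F.card := Finset.card_image_le
    omega
  obtain ⟨j, hj, hlab⟩ := exists_label S _
    (fun s => if s.1 t = x.1 t then s.1 0 else s.1 t) hcard
  obtain ⟨hjx, hjF⟩ := Finset.mem_erase.1 hj
  rw [Finset.mem_compl] at hjF
  have hmx : x ∈ Sub F S x := ⟨fun _ _ => rfl, hx⟩
  set x1 := nb x j with hx1
  have e10 : x1.1 0 = j := nb_zero _ _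
  have e1t : x1.1 t = x.1 t := nb_of_ne x ht0 (Ne.symm hjx)
  have m1 : x1 ∈ Sub F S x :=
    nb_mem_Sub h0 hmx hjF fun hs => hlab _ hs (by simp only [← hx1, e1t, e10, if_true])
  set x2 := nb x1 (x.1 t) with hx2
  have e20 : x2.1 0 = x.1 t := nb_zero _ _
  have e2t : x2.1 t = j := (nb_of_eq x1 e1t).trans e10
  have m2 : x2 ∈ Sub F S x :=
    nb_mem_Sub h0 m1 hxF fun hs => hlab _ hs (by simp only [← hx2, e2t, if_neg hjx])
  have J2 : Join (Sub F S x) x x2 := (Join.step _ hmx m1).trans (Join.step _ m1 m2)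
  by_cases hji : j = i
  · exact ⟨x2, e2t.trans hji, J2⟩
  set x3 := nb x2 i with hx3
  have e30 : x3.1 0 = i := nb_zero _ _
  have e3t : x3.1 t = j := (nb_of_ne x2 ht0 (by rwa [e2t])).trans e2t
  have m3 : x3 ∈ Sub F S x :=
    nb_mem_Sub h0 m2 hi fun hs => hlab _ hs (by simp only [← hx3, e3t, if_neg hjx])
  set x4 := nb x3 j with hx4
  have e4t : x4.1 t = i := (nb_of_eq x3 e3t).trans e30
  have m4 : x4 ∈ Sub F S x := nb_mem_Sub h0 m3 hjF fun hs => hfree _ hs e4t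
  exact ⟨x4, e4t, (J2.trans (Join.step _ m2 m3)).trans (Join.step _ m3 m4)⟩

lemma Join.agree {F : Finset (Fin (k + 1))} {S : Finset (NKVertex n (k + 1))}
    {x p q : NKVertex n (k + 1)} (h : Join (Sub F S x) p q) (hp : p ∈ Sub F S x) :
    q ∈ Sub F S x := (h.reachable hp).1

/-- Connectivity of sub-stars: freezing the positions `F` leaves a graph that stays connected after
the removal of at most `n - |F| - 2` vertices. -/
lemma join_of_card_le (hkn : k + 3 ≤ n) (d : ℕ) : ∀ F : Finset (Fin (k + 1)),
    (0 : Fin (k + 1)) ∉ F → F.card + d = k → ∀ S : Finset (NKVertex n (k + 1)),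
    S.card + F.card + 2 ≤ n → ∀ x y, x ∉ S → y ∉ S → (∀ j ∈ F, y.1 j = x.1 j) →
    Join (Sub F S x) x y := by
  classical
  induction d with
  | zero =>
    intro F h0 hF S _ x y hx hy hxy
    have hall : ∀ j : Fin (k + 1), j ≠ 0 → j ∈ F := by
      have h1 : F ⊆ Finset.univ.erase 0 := fun j hj =>
        Finset.mem_erase.2 ⟨fun e => h0 (e ▸ hj), Finset.mem_univ _⟩
      have h2 := Finset.eq_of_subset_of_card_le h1 (by simp; omega)
      intro j hj
      rw [h2]
      exact Finset.mem_erase.2 ⟨hj, Finset.mem_univ _⟩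
    have hy' : y = nb x (y.1 0) := eq_nb_of_tail fun j hj => hxy j (hall j hj)
    have my : y ∈ Sub F S x := ⟨hxy, hy⟩
    rw [hy'] at my ⊢
    exact Join.step _ ⟨fun _ _ => rfl, hx⟩ my
  | succ d ih =>
    intro F h0 hF S hS x y hx hy hxy
    obtain ⟨t, ht⟩ : ∃ t, t ∉ insert 0 F := by
      by_contra! hc
      have := Finset.card_le_card (fun j _ => hc j : Finset.univ ⊆ insert 0 F)
      rw [Finset.card_insert_of_notMem h0] at this
      simp at this
      omega
    rw [Finset.mem_insert, not_or] at ht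
    obtain ⟨ht0, htF⟩ := ht
    obtain ⟨i, hi, hfree⟩ := exists_label S ((F.image x.1)ᶜ) (fun s => s.1 t) (by
      have : (F.image x.1).card ≤ F.card := Finset.card_image_le
      rw [Finset.card_compl, Fintype.card_fin]
      omega)
    rw [Finset.mem_compl] at hi
    have himg : F.image y.1 = F.image x.1 := Finset.image_congr fun j hj => hxy j hj
    have hsub : Sub F S y = Sub F S x := by
      ext p
      exact and_congr_left fun _ => forall₂_congr fun j hj => by rw [hxy j hj]
    obtain ⟨x', hxt, Jx⟩ := join_copy h0 ht0 htF S x hx hS hi hfree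
    obtain ⟨y', hyt, Jy⟩ := join_copy h0 ht0 htF S y hy hS (himg ▸ hi) hfree
    rw [hsub] at Jy
    have mx := Jx.agree ⟨fun _ _ => rfl, hx⟩
    have my := Jy.agree ⟨hxy, hy⟩
    have J := ih (insert t F) (by simp [h0, Ne.symm ht0])
      (by rw [Finset.card_insert_of_notMem htF]; omega) ∅
      (by rw [Finset.card_insert_of_notMem htF, Finset.card_empty]; omega) x' y'
      (by simp) (by simp) (by
        intro j hj
        rcases Finset.mem_insert.1 hj with rfl | hj
        · rw [hxt, hyt]
        · rw [mx.1 j hj, my.1 j hj])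
    refine (Jx.trans (J.mono ?_)).trans Jy.symm
    rintro p ⟨hp, -⟩
    refine ⟨fun j hj => (hp j (Finset.mem_insert_of_mem hj)).trans (mx.1 j hj), fun hs => ?_⟩
    exact hfree p hs ((hp t (Finset.mem_insert_self _ _)).trans hxt)

/-! ### Edges between copies -/

lemma exists_set (p : NKVertex n (k + 1)) (t : Fin (k + 1)) (i : Fin n) :
    ∃ p' : NKVertex n (k + 1), p'.1 t = i ∧ ∀ r, r ≠ t → p.1 r ≠ i → p'.1 r = p.1 r :=
  ⟨ren (Equiv.swap (p.1 t) i) p, by simp [ren], fun _ hr hi =>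
    Equiv.swap_apply_of_ne_of_ne (fun e => hr (p.2 e)) hi⟩

lemma exists_vertex₂ (hkn : k + 3 ≤ n) {t : Fin (k + 1)} (ht : t ≠ 0) {j i : Fin n}
    (hji : j ≠ i) : ∃ p : NKVertex n (k + 1), p.1 0 = j ∧ p.1 t = i := by
  obtain ⟨p, hp, -⟩ := exists_set
    (⟨Fin.castLE (by omega), Fin.castLE_injective _⟩ : NKVertex n (k + 1)) 0 j
  obtain ⟨p', hp', h⟩ := exists_set p t i
  exact ⟨p', (h 0 ht.symm (by rwa [hp])).trans hp, hp'⟩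

lemma exists_vertex₃ (hkn : k + 3 ≤ n) {t s : Fin (k + 1)} (ht : t ≠ 0) (hs : s ≠ 0)
    (hts : t ≠ s) {j i c : Fin n} (hji : j ≠ i) (hcj : c ≠ j) (hci : c ≠ i) :
    ∃ p : NKVertex n (k + 1), p.1 0 = j ∧ p.1 t = i ∧ p.1 s = c := by
  obtain ⟨p, h0, h1⟩ := exists_vertex₂ hkn ht hji
  obtain ⟨p', hp', h⟩ := exists_set p s c
  exact ⟨p', (h 0 hs.symm (by rw [h0]; exact hcj.symm)).trans h0,
    (h t hts (by rw [h1]; exact hci.symm)).trans h1, hp'⟩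

open Classical in
/-- The faults lying on the swap-edges at position `t` between the copies `i` and `j`. -/
noncomputable def between (t : Fin (k + 1)) (S : Finset (NKVertex n (k + 1))) (i j : Fin n) :
    Finset (NKVertex n (k + 1)) :=
  S.filter fun x => (x.1 0 = i ∧ x.1 t = j) ∨ (x.1 0 = j ∧ x.1 t = i)

/-- Destroying every edge between two copies takes at least `n - 2` faults there: varying the symbol
in a third position `s` gives that many disjoint edges. -/
lemma le_card_between (hkn : k + 3 ≤ n) {t s : Fin (k + 1)} (ht : t ≠ 0) (hs : s ≠ 0)
    (hts : t ≠ s) {S : Finset (NKVertex n (k + 1))} {i j : Fin n} (hji : j ≠ i)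
    (hdead : ¬ ∃ p : NKVertex n (k + 1), p.1 t = i ∧ p ∉ S ∧ (nb p i).1 t = j ∧ nb p i ∉ S) :
    n ≤ (between t S i j).card + 2 := by
  classical
  by_contra! hlt
  obtain ⟨c, hc, hlab⟩ := exists_label (between t S i j) ({i, j} : Finset (Fin n))ᶜ
    (fun x => x.1 s) (by
      rw [Finset.card_compl, Fintype.card_fin, Finset.card_pair hji.symm]
      omega)
  simp only [Finset.mem_compl, Finset.mem_insert, Finset.mem_singleton, not_or] at hc
  obtain ⟨p, h0, h1, h2⟩ := exists_vertex₃ hkn ht hs hts hji hc.2 hc.1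
  have e0 := nb_zero p i
  have e1 : (nb p i).1 t = j := (nb_of_eq p h1).trans h0
  have e2 : (nb p i).1 s = c := (nb_of_ne p hs (by rw [h2]; exact hc.1)).trans h2
  exact hdead ⟨p, h1,
    fun h => hlab p (Finset.mem_filter.2 ⟨h, Or.inr ⟨h0, h1⟩⟩) h2, e1,
    fun h => hlab _ (Finset.mem_filter.2 ⟨h, Or.inl ⟨e0, e1⟩⟩) e2⟩

lemma card_between_add_le {t : Fin (k + 1)} (S : Finset (NKVertex n (k + 1))) {i j a b : Fin n}
    (h : ¬ (i = a ∧ j = b)) (h' : ¬ (i = b ∧ j = a)) :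
    (between t S i j).card + (between t S a b).card ≤ S.card := by
  classical
  rw [← Finset.card_union_of_disjoint]
  · exact Finset.card_le_card (Finset.union_subset (Finset.filter_subset _ _)
      (Finset.filter_subset _ _))
  · rw [Finset.disjoint_left]
    intro x hx hx'
    simp only [between, Finset.mem_filter] at hx hx'
    rcases hx.2 with ⟨h1, h2⟩ | ⟨h1, h2⟩ <;> rcases hx'.2 with ⟨h3, h4⟩ | ⟨h3, h4⟩ <;> grind

/-- If every copy other than `c` is connected, then all these copies together are connected: the
faults cannot destroy the edges of two pairs of copies, so a third copy links any two. -/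
lemma join_main (hkn : k + 3 ≤ n) {t s : Fin (k + 1)} (ht : t ≠ 0) (hs : s ≠ 0) (hts : t ≠ s)
    {S : Finset (NKVertex n (k + 1))} (hS : S.card + 3 ≤ n + k) (hk : 2 ≤ k) (c : Fin n)
    (hcopy : ∀ x y : NKVertex n (k + 1), x ∉ S → y ∉ S → x.1 t ≠ c → y.1 t = x.1 t →
      Join {p | p ∉ S} x y)
    (x y : NKVertex n (k + 1)) (hx : x ∉ S) (hy : y ∉ S) (hxc : x.1 t ≠ c) (hyc : y.1 t ≠ c) :
    Join {p | p ∉ S} x y := by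
  classical
  by_cases hxy : y.1 t = x.1 t
  · exact hcopy x y hx hy hxc hxy
  set i := x.1 t with hi
  set j := y.1 t with hj
  have link : ∀ x y : NKVertex n (k + 1), x ∉ S → y ∉ S → x.1 t ≠ c → y.1 t ≠ c →
      (∃ p : NKVertex n (k + 1), p.1 t = x.1 t ∧ p ∉ S ∧ (nb p (x.1 t)).1 t = y.1 t ∧
        nb p (x.1 t) ∉ S) → Join {p | p ∉ S} x y := by
    rintro x y hx hy hxc hyc ⟨p, h1, h2, h3, h4⟩
    exact ((hcopy x p hx h2 hxc h1).trans (Join.step _ h2 h4)).trans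
      (hcopy y _ hy h4 hyc h3).symm
  by_cases hdead : ∃ p : NKVertex n (k + 1), p.1 t = i ∧ p ∉ S ∧ (nb p i).1 t = j ∧ nb p i ∉ S
  · exact link x y hx hy hxc hyc hdead
  have h1 := le_card_between hkn ht hs hts hxy hdead
  obtain ⟨l, hl⟩ : ∃ l, l ∉ ({c, i, j} : Finset (Fin n)) := by
    by_contra! hc
    have := (Finset.card_le_card (fun l _ => hc l : Finset.univ ⊆ ({c, i, j} : Finset (Fin n)))).trans
      Finset.card_le_three
    simp at this
    omega
  simp only [Finset.mem_insert, Finset.mem_singleton, not_or] at hl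
  obtain ⟨hlc, hli, hlj⟩ := hl
  obtain ⟨p, p1, p2, p3, p4⟩ : ∃ p : NKVertex n (k + 1),
      p.1 t = i ∧ p ∉ S ∧ (nb p i).1 t = l ∧ nb p i ∉ S := by
    by_contra hd
    have h2 := le_card_between hkn ht hs hts hli hd
    have h3 := card_between_add_le (t := t) S (i := i) (j := j) (a := i) (b := l)
      (by grind) (by grind)
    omega
  have hz : ∃ q : NKVertex n (k + 1), q.1 t = l ∧ q ∉ S ∧ (nb q l).1 t = j ∧ nb q l ∉ S := by
    by_contra hd
    have h2 := le_card_between hkn ht hs hts (Ne.symm hlj) hd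
    have h3 := card_between_add_le (t := t) S (i := i) (j := j) (a := l) (b := j)
      (by grind) (by grind)
    omega
  exact (link x _ hx p4 hxc (by rwa [p3]) ⟨p, p1, p2, rfl, p4⟩).trans
    (link _ y p4 hy (by rwa [p3]) hyc (by rwa [p3]))

/-! ### Leaving the exceptional copy -/

/-- The closed neighbourhood, inside their common copy, of the ends `v` and `w = nb v b` of an edge
has at least `n + k - 2` elements. -/
lemma exists_nbhd (hkn : k + 3 ≤ n) {t : Fin (k + 1)} (ht : t ≠ 0) (v : NKVertex n (k + 1))
    {b : Fin n} (hb : b ≠ v.1 0) (hbt : b ≠ v.1 t) :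
    ∃ X : Finset (NKVertex n (k + 1)), n + k ≤ X.card + 2 ∧
      ∀ x ∈ X, x.1 t = v.1 t ∧ ∃ a, x = nb v a ∨ x = nb (nb v b) a := by
  classical
  have hw0 := nb_zero v b
  have hwt : (nb v b).1 t = v.1 t := nb_of_ne v ht hbt.symm
  -- It suffices to find `k - 1` neighbours of `nb v b` that are not neighbours of `v`.
  obtain ⟨C, hC, hCt⟩ : ∃ C : Finset (Fin n), k ≤ C.card + 1 ∧
      ∀ c ∈ C, c ≠ v.1 t ∧ nb (nb v b) c ≠ nb v c := by
    by_cases hr : ∃ r, v.1 r = b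
    · obtain ⟨r, hr⟩ := hr
      have hr0 : r ≠ 0 := fun e => hb (by rw [← hr, e])
      refine ⟨({v.1 0, b, v.1 t} : Finset (Fin n))ᶜ, ?_, fun c hc => ?_⟩
      · have := Finset.card_le_three (a := v.1 0) (b := b) (c := v.1 t)
        rw [Finset.card_compl, Fintype.card_fin]
        omega
      · simp only [Finset.mem_compl, Finset.mem_insert, Finset.mem_singleton, not_or] at hc
        refine ⟨hc.2.2, fun e => hb ?_⟩
        have e1 : (nb v b).1 r = v.1 0 := nb_of_eq v hr
        have e2 : (nb (nb v b) c).1 r = v.1 0 :=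
          (nb_of_ne _ hr0 (by rw [e1]; exact Ne.symm hc.1)).trans e1
        rw [← e2, e, nb_of_ne v hr0 (by rw [hr]; exact Ne.symm hc.2.1), hr]
    · refine ⟨(({0, t} : Finset (Fin (k + 1)))ᶜ).image v.1, ?_, fun c hc => ?_⟩
      · rw [Finset.card_image_of_injective _ v.2, Finset.card_compl, Fintype.card_fin,
          Finset.card_pair ht.symm]
        omega
      · obtain ⟨j, hj, rfl⟩ := Finset.mem_image.1 hc
        simp only [Finset.mem_compl, Finset.mem_insert, Finset.mem_singleton, not_or] at hj
        refine ⟨fun e => hj.2 (v.2 e), fun e => hb ?_⟩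
        have e1 : (nb v b).1 j = v.1 j := nb_of_ne v hj.1 fun e => hr ⟨j, e⟩
        rw [← nb_of_eq v (rfl : v.1 j = v.1 j), ← e, nb_of_eq _ e1, hw0]
  refine ⟨(Finset.univ.erase (v.1 t)).image (nb v) ∪ C.image (nb (nb v b)), ?_, ?_⟩
  · rw [Finset.card_union_of_disjoint, Finset.card_image_of_injective _ (nb_injective _),
      Finset.card_image_of_injective _ (nb_injective _), Finset.card_erase_of_mem
      (Finset.mem_univ _), Finset.card_univ, Fintype.card_fin]
    · omega
    · rw [Finset.disjoint_left]
      intro x hx hx'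
      obtain ⟨a, -, rfl⟩ := Finset.mem_image.1 hx
      obtain ⟨c, hc, e⟩ := Finset.mem_image.1 hx'
      have : c = a := by rw [← nb_zero (nb v b) c, e, nb_zero]
      subst this
      exact (hCt c hc).2 e
  · intro x hx
    rcases Finset.mem_union.1 hx with hx | hx
    · obtain ⟨a, ha, rfl⟩ := Finset.mem_image.1 hx
      exact ⟨nb_of_ne v ht (Ne.symm (Finset.mem_erase.1 ha).1), a, Or.inl rfl⟩
    · obtain ⟨c, hc, rfl⟩ := Finset.mem_image.1 hx
      exact ⟨(nb_of_ne _ ht (by rw [hwt]; exact Ne.symm (hCt c hc).1)).trans hwt, c, Or.inr rfl⟩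

/-- A surviving edge leaves the copy containing it: each vertex `x` of the closed neighbourhood of
the edge in its copy has a private swap-neighbour in another copy, and there are more such `x` than
faults. -/
lemma escape (hkn : k + 3 ≤ n) {t : Fin (k + 1)} (ht : t ≠ 0)
    {S : Finset (NKVertex n (k + 1))} (hS : S.card + 3 ≤ n + k) (c : Fin n)
    (v : NKVertex n (k + 1)) (hv : v ∉ S) {b : Fin n} (hb : b ≠ v.1 0) (hw : nb v b ∉ S) :
    ∃ y, y ∉ S ∧ y.1 t ≠ c ∧ Join {p | p ∉ S} v y := by
  classical
  by_cases hvc : v.1 t = c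
  swap
  · exact ⟨v, hv, hvc, Relation.ReflTransGen.refl⟩
  by_cases hbt : b = v.1 t
  · refine ⟨nb v b, hw, ?_, Join.step _ hv hw⟩
    rw [nb_of_eq v hbt.symm, ← hvc]
    exact fun e => ht (v.2 e).symm
  obtain ⟨X, hX, hXt⟩ := exists_nbhd hkn ht v hb hbt
  obtain ⟨x, hx, hlab⟩ := exists_label S X
    (fun s => if s.1 t = v.1 t then s else nb s (s.1 t)) (by omega)
  obtain ⟨hxt, a, ha⟩ := hXt x hx
  have hx0 : x.1 0 ≠ v.1 t := fun e => ht (x.2 (e.trans hxt.symm)).symm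
  have hxS : x ∉ S := fun h => hlab x h (if_pos hxt)
  have et : (nb x (v.1 t)).1 t = x.1 0 := nb_of_eq x hxt
  have hxS' : nb x (v.1 t) ∉ S := fun h => hlab _ h (by
    simp only [et, if_neg hx0, nb_nb])
  refine ⟨nb x (v.1 t), hxS', by rw [et, ← hvc]; exact hx0, Join.trans ?_ (Join.step _ hxS hxS')⟩
  rcases ha with rfl | rfl
  · exact Join.step _ hv hxS
  · exact (Join.step _ hv hw).trans (Join.step _ hw hxS)

/-! ### The lower bound -/

/-- Two vertices that are not isolated by at most `n + k - 3` faults (`n + K - 4` for `K = k + 1`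
positions) remain connected. -/
lemma join_of_not_isolated (hkn : k + 3 ≤ n) (hk : 1 ≤ k) {S : Finset (NKVertex n (k + 1))}
    (hS : S.card + 3 ≤ n + k) (x y : NKVertex n (k + 1)) (hx : x ∉ S) (hy : y ∉ S)
    (hx' : ∃ a, a ≠ x.1 0 ∧ nb x a ∉ S) (hy' : ∃ a, a ≠ y.1 0 ∧ nb y a ∉ S) :
    Join {p | p ∉ S} x y := by
  classical
  rcases (show k = 1 ∨ 2 ≤ k by omega) with rfl | hk2
  · exact (join_of_card_le hkn 1 ∅ (by simp) (by simp) S (by simp; omega) x y hx hy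
      (by simp)).mono fun p hp => hp.2
  let t : Fin (k + 1) := ⟨1, by omega⟩
  let s : Fin (k + 1) := ⟨2, by omega⟩
  have ht : t ≠ 0 := by simp [t, Fin.ext_iff]
  have hs : s ≠ 0 := by simp [s, Fin.ext_iff]
  have hts : t ≠ s := by simp [t, s]
  -- Two copies with `n - 2` faults each would need more faults than there are.
  obtain ⟨c, hc⟩ : ∃ c : Fin n, ∀ i, i ≠ c → (S.filter fun p => p.1 t = i).card + 3 ≤ n := by
    by_contra! h
    obtain ⟨i, -, hi⟩ := h ⟨0, by omega⟩
    obtain ⟨j, hji, hj⟩ := h i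
    have h2 : (S.filter fun p => p.1 t = i).card + (S.filter fun p => p.1 t = j).card ≤
        S.card := by
      rw [← Finset.card_union_of_disjoint]
      · exact Finset.card_le_card (Finset.union_subset (Finset.filter_subset _ _)
          (Finset.filter_subset _ _))
      · rw [Finset.disjoint_left]
        intro p hp hp'
        exact hji ((Finset.mem_filter.1 hp').2.symm.trans (Finset.mem_filter.1 hp).2)
    omega
  have hcopy : ∀ x y : NKVertex n (k + 1), x ∉ S → y ∉ S → x.1 t ≠ c → y.1 t = x.1 t →
      Join {p | p ∉ S} x y := by
    intro x y hx hy hxc hxy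
    refine (join_of_card_le hkn (k - 1) {t} (by simpa using ht.symm) (by simp; omega)
      (S.filter fun p => p.1 t = x.1 t) ?_ x y (by simp [hx]) (by simp [hy])
      (by simpa using hxy)).mono ?_
    · have := hc _ hxc
      simp only [Finset.card_singleton]
      omega
    · rintro p ⟨hp, hpS⟩ h
      exact hpS (Finset.mem_filter.2 ⟨h, hp t (Finset.mem_singleton_self t)⟩)
  obtain ⟨a, ha, hxa⟩ := hx'
  obtain ⟨b, hb, hyb⟩ := hy'
  obtain ⟨x', h1, h2, h3⟩ := escape hkn ht hS c x hx ha hxa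
  obtain ⟨y', h4, h5, h6⟩ := escape hkn ht hS c y hy hb hyb
  exact (h3.trans (join_main hkn ht hs hts hS hk2 c hcopy x' y' h1 h4 h2 h5)).trans h6.symm

/-- The empty remainder, also counted as disconnected, is excluded by the `n (n - 1)` choices for
the first two symbols. -/
lemma le_of_isHSuperCut (hkn : k + 3 ≤ n) (hk : 1 ≤ k) (S : Set (NKVertex n (k + 1)))
    (hS : IsHSuperCut (nkStar n (k + 1)) 1 S) : n + k - 2 ≤ S.ncard := by
  classical
  by_contra! hlt
  obtain ⟨T, rfl⟩ := S.toFinite.exists_finset_coe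
  rw [Set.ncard_coe_finset] at hlt
  obtain ⟨hcon, hdeg⟩ := hS
  have hnb : ∀ x, x ∉ T → ∃ a, a ≠ x.1 0 ∧ nb x a ∉ T := by
    intro x hx
    obtain ⟨y, hy, hyT⟩ := Set.nonempty_of_ncard_ne_zero (Nat.one_le_iff_ne_zero.1 (hdeg x hx))
    obtain ⟨a, ha, rfl⟩ := adj_iff.1 hy
    exact ⟨a, ha, hyT⟩
  refine hcon ((SimpleGraph.connected_iff _).2 ⟨?_, ?_⟩)
  · rintro ⟨x, hx⟩ ⟨y, hy⟩
    exact ((join_of_not_isolated hkn hk (by omega) x y hx hy (hnb x hx) (hnb y hy)).reachable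
      hx).2
  · have ht : (⟨1, by omega⟩ : Fin (k + 1)) ≠ 0 := by simp [Fin.ext_iff]
    obtain ⟨⟨j, i⟩, hji, hlab⟩ := exists_label T (Finset.univ : Finset (Fin n)).offDiag
      (fun s => (s.1 0, s.1 ⟨1, by omega⟩)) (by
        rw [Finset.offDiag_card, Finset.card_univ, Fintype.card_fin]
        have : 4 * n ≤ n * n := Nat.mul_le_mul_right n (by omega)
        omega)
    obtain ⟨p, h0, h1⟩ := exists_vertex₂ hkn ht (Finset.mem_offDiag.1 hji).2.2
    exact ⟨⟨p, fun h => hlab p h (by rw [h0, h1])⟩⟩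

/-! ### The upper bound -/

/-- The neighbourhood of an unswap-edge is a `1`-super vertex-cut. -/
lemma exists_isHSuperCut (hkn : k + 3 ≤ n) (hk : 1 ≤ k) :
    ∃ S : Set (NKVertex n (k + 1)), IsHSuperCut (nkStar n (k + 1)) 1 S ∧
      S.ncard ≤ n + k - 2 := by
  classical
  have two : ∀ w : NKVertex n (k + 1), ∃ b b', b ≠ b' ∧ (∀ j, w.1 j ≠ b) ∧ ∀ j, w.1 j ≠ b' := by
    intro w
    have : 1 < ((Finset.univ.image w.1)ᶜ).card := by
      rw [Finset.card_compl, Fintype.card_fin, Finset.card_image_of_injective _ w.2,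
        Finset.card_univ, Fintype.card_fin]
      omega
    obtain ⟨b, hb, b', hb', hne⟩ := Finset.one_lt_card.1 this
    simp only [Finset.mem_compl, Finset.mem_image, Finset.mem_univ, true_and, not_exists]
      at hb hb'
    exact ⟨b, b', hne, hb, hb'⟩
  let u : NKVertex n (k + 1) := ⟨Fin.castLE (by omega), Fin.castLE_injective _⟩
  clear_value u
  obtain ⟨b, b', hbb', hb, hb'⟩ := two u
  set v := nb u b with hv
  have hv0 : v.1 0 = b := nb_zero _ _
  have hvj : ∀ j, j ≠ 0 → v.1 j = u.1 j := fun j hj => nb_of_ne u hj (hb j)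
  have huv : u ≠ v := fun e => hb 0 (by rw [e, hv0])
  let A : Finset (NKVertex n (k + 1)) := (({u.1 0, b} : Finset (Fin n))ᶜ).image (nb u)
  let B : Finset (NKVertex n (k + 1)) := (Finset.univ.erase 0).image fun j => nb v (u.1 j)
  have hNu : ∀ a, nb u a = u ∨ nb u a = v ∨ nb u a ∈ A ∪ B := by
    intro a
    by_cases h1 : a = u.1 0
    · exact Or.inl (by rw [h1, nb_self])
    by_cases h2 : a = b
    · exact Or.inr (Or.inl (by rw [h2]))
    · exact Or.inr (Or.inr (Finset.mem_union_left _ (Finset.mem_image.2 ⟨a, by simp [h1, h2], rfl⟩)))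
  have hNv : ∀ a, nb v a = u ∨ nb v a = v ∨ nb v a ∈ A ∪ B := by
    intro a
    by_cases h : ∃ j, u.1 j = a
    · obtain ⟨j, rfl⟩ := h
      by_cases hj : j = 0
      · subst hj
        exact Or.inl (nb_nb u b)
      · exact Or.inr (Or.inr (Finset.mem_union_right _ (Finset.mem_image.2 ⟨j, by simp [hj], rfl⟩)))
    · have : nb v a = nb u a := by
        have h3 := eq_nb_of_tail (p := u) (q := nb v a) fun j hj => by
          rw [nb_of_ne v hj (by rw [hvj j hj]; exact fun e => h ⟨j, e⟩), hvj j hj]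
        rwa [nb_zero] at h3
      rw [this]
      exact hNu a
  -- The tails occurring in the cut: that of `u`, or that of `u` changed at one position.
  have hcut : ∀ x ∈ A ∪ B, (∀ j, j ≠ 0 → x.1 j = u.1 j) ∨
      ∃ j, j ≠ 0 ∧ x.1 0 = u.1 j ∧ (x.1 j = u.1 0 ∨ x.1 j = b) ∧
        ∀ r, r ≠ 0 → r ≠ j → x.1 r = u.1 r := by
    intro x hx
    rcases Finset.mem_union.1 hx with hx | hx
    · obtain ⟨a, -, rfl⟩ := Finset.mem_image.1 hx
      by_cases h : ∃ j, j ≠ 0 ∧ u.1 j = a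
      · obtain ⟨j, hj, rfl⟩ := h
        exact Or.inr ⟨j, hj, nb_zero _ _, Or.inl (nb_of_eq u rfl),
          fun r hr hrj => nb_of_ne u hr fun e => hrj (u.2 e)⟩
      · exact Or.inl fun j hj => nb_of_ne u hj fun e => h ⟨j, hj, e⟩
    · obtain ⟨j, hj, rfl⟩ := Finset.mem_image.1 hx
      have hj := (Finset.mem_erase.1 hj).1
      refine Or.inr ⟨j, hj, nb_zero _ _, Or.inr ((nb_of_eq v (hvj j hj)).trans hv0),
          fun r hr hrj => ?_⟩
      rw [nb_of_ne v hr (by rw [hvj r hr]; exact fun e => hrj (u.2 e)), hvj r hr]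
  have huS : u ∉ A ∪ B := by
    intro h
    rcases Finset.mem_union.1 h with h | h
    · obtain ⟨a, ha, e⟩ := Finset.mem_image.1 h
      simp only [Finset.mem_compl, Finset.mem_insert, Finset.mem_singleton, not_or] at ha
      exact ha.1 (by rw [← nb_zero u a, e])
    · obtain ⟨j, hj, e⟩ := Finset.mem_image.1 h
      have h0 := nb_zero v (u.1 j)
      rw [e] at h0
      exact (Finset.mem_erase.1 hj).1 (u.2 h0).symm
  have hvS : v ∉ A ∪ B := by
    intro h
    rcases Finset.mem_union.1 h with h | h
    · obtain ⟨a, ha, e⟩ := Finset.mem_image.1 h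
      simp only [Finset.mem_compl, Finset.mem_insert, Finset.mem_singleton, not_or] at ha
      exact ha.2 (by rw [← nb_zero u a, e, hv0])
    · obtain ⟨j, hj, e⟩ := Finset.mem_image.1 h
      have h0 := nb_zero v (u.1 j)
      rw [e, hv0] at h0
      exact hb j h0.symm
  refine ⟨↑(A ∪ B), ⟨fun hcon => ?_, fun w hw => ?_⟩, ?_⟩
  · let t : Fin (k + 1) := ⟨1, by omega⟩
    have ht : t ≠ 0 := by simp [t, Fin.ext_iff]
    obtain ⟨w, hwt, -⟩ := exists_set u t b'
    have hwS : w ∉ A ∪ B := by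
      intro h
      rcases hcut w h with h | ⟨j, hj, -, h1, h2⟩
      · exact hb' t (by rw [← h t ht, hwt])
      · by_cases hjt : t = j
        · subst hjt
          rw [hwt] at h1
          rcases h1 with h1 | h1
          · exact hb' 0 h1.symm
          · exact hbb' h1.symm
        · exact hb' t (by rw [← h2 t ht hjt, hwt])
    have hreach := hcon.preconnected ⟨u, huS⟩ ⟨w, hwS⟩
    rw [SimpleGraph.reachable_iff_reflTransGen] at hreach
    -- `{u, v}` is closed under adjacency outside the cut.
    have hinv : ∀ z, Relation.ReflTransGen
        ((nkStar n (k + 1)).induce (↑(A ∪ B) : Set (NKVertex n (k + 1)))ᶜ).Adj ⟨u, huS⟩ z →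
        z.1 = u ∨ z.1 = v := by
      intro z hz
      induction hz with
      | refl => exact Or.inl rfl
      | @tail x y _ hxy ih =>
        obtain ⟨a, -, ha⟩ := adj_iff.1 (SimpleGraph.induce_adj.1 hxy)
        have hyS : y.1 ∉ A ∪ B := y.2
        rcases ih with ih | ih <;> rw [ih] at ha
        · have := hNu a
          rw [← ha] at this
          tauto
        · have := hNv a
          rw [← ha] at this
          tauto
    rcases hinv _ hreach with h | h
    · exact hb' t (by rw [← hwt, ← h])
    · exact hb' t (by rw [← hwt, ← hvj t ht, ← h])
  · refine (Set.ncard_pos (Set.toFinite _)).2 ?_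
    have hwS : w ∉ A ∪ B := hw
    by_cases hwu : w = u
    · subst hwu
      exact ⟨v, adj_iff.2 ⟨b, (hb 0).symm, rfl⟩, hvS⟩
    by_cases hwv : w = v
    · rw [hwv]
      exact ⟨u, (adj_iff.2 ⟨b, (hb 0).symm, rfl⟩ : (nkStar n (k + 1)).Adj u v).symm, huS⟩
    obtain ⟨a, a', haa', ha, ha'⟩ := two w
    by_contra hno
    have hmem : ∀ c, (∀ j, w.1 j ≠ c) → ∃ j, j ≠ 0 ∧ c = u.1 j ∧ w.1 j ≠ u.1 j ∧
        ∀ r, r ≠ 0 → r ≠ j → w.1 r = u.1 r := by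
      intro c hc
      have hin : nb w c ∈ A ∪ B := by
        by_contra h
        exact hno ⟨nb w c, adj_iff.2 ⟨c, (hc 0).symm, rfl⟩, h⟩
      have htail : ∀ j, j ≠ 0 → (nb w c).1 j = w.1 j := fun j hj => nb_of_ne w hj (hc j)
      rcases hcut _ hin with h | ⟨j, hj, h0, h1, h2⟩
      · have e : w = nb u (w.1 0) := eq_nb_of_tail fun j hj => by rw [← htail j hj, h j hj]
        have := hNu (w.1 0)
        rw [← e] at this
        tauto
      · refine ⟨j, hj, by rw [← h0, nb_zero], ?_, fun r hr hrj => by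
          rw [← htail r hr, h2 r hr hrj]⟩
        rw [htail j hj] at h1
        rcases h1 with h1 | h1 <;> rw [h1]
        · exact fun e => hj (u.2 e).symm
        · exact (hb j).symm
    obtain ⟨j, hj, h1, h2, h3⟩ := hmem a ha
    obtain ⟨j', hj', h1', h2', h3'⟩ := hmem a' ha'
    by_cases hjj : j = j'
    · exact haa' (by rw [h1, h1', hjj])
    · exact h2 (h3' j hj hjj)
  · rw [Set.ncard_coe_finset]
    have h1 : A.card ≤ n - 2 := Finset.card_image_le.trans (by
      rw [Finset.card_compl, Fintype.card_fin, Finset.card_pair (hb 0)])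
    have h2 : B.card ≤ k := Finset.card_image_le.trans (by
      rw [Finset.card_erase_of_mem (Finset.mem_univ _), Finset.card_univ, Fintype.card_fin]
      omega)
    have := Finset.card_union_le A B
    omega

end NKStar

/-- For `2 ≤ k ≤ n−2`, `κ_s^{(1)}(S_{n,k}) = n + k − 3`. -/
theorem hSuperConn_one_nkStar (n k : ℕ) (hk2 : 2 ≤ k) (hkn : k ≤ n - 2) (hn : 4 ≤ n) :
    hSuperConn (nkStar n k) 1 = n + k - 3 := by
  obtain ⟨k, rfl⟩ : ∃ j, k = j + 1 := ⟨k - 1, by omega⟩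
  have hkn' : k + 3 ≤ n := by omega
  obtain ⟨S, hS, hcard⟩ := NKStar.exists_isHSuperCut hkn' (by omega)
  have hmem : S.ncard ∈ Set.ncard '' {S | IsHSuperCut (nkStar n (k + 1)) 1 S} := ⟨S, hS, rfl⟩
  refine le_antisymm ((Nat.sInf_le hmem).trans (by omega)) (le_csInf ⟨_, hmem⟩ ?_)
  rintro _ ⟨T, hT, rfl⟩
  have := NKStar.le_of_isHSuperCut hkn' (by omega) T hT
  omega
end

section
/- For all integers n and k with 2 ≤ k ≤ n−2 and n ≥ 4, the 2-super connectivity of the (n,k)-star graph satisfies κ_s^{(2)}(S_{n,k}) = n + 2k − 5. -/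
namespace NKStarAux

open Finset
open scoped Classical

/-! ### Swaps, relabellings and cells -/

-- Throughout, `k = K + 1` and `d = n - k`.
variable {n K d : ℕ}

noncomputable instance instFintypeNKVertex (n k : ℕ) : Fintype (NKVertex n k) := by
  unfold NKVertex
  exact Fintype.ofFinite _

theorem vext {p q : NKVertex n (K + 1)} (h : ∀ j, p.1 j = q.1 j) : p = q :=
  Subtype.ext (funext h)

/-- The swap-neighbour of `p` obtained by exchanging the first bit with the bit at position `t`. -/
def sw (p : NKVertex n (K + 1)) (t : Fin (K + 1)) : NKVertex n (K + 1) :=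
  ⟨p.1 ∘ Equiv.swap 0 t, p.2.comp (Equiv.injective _)⟩

/-- The vertex obtained from `p` by exchanging the symbols `a` and `b` wherever they occur. -/
def relabel (a b : Fin n) (p : NKVertex n (K + 1)) : NKVertex n (K + 1) :=
  ⟨Equiv.swap a b ∘ p.1, (Equiv.injective _).comp p.2⟩

theorem sw_zero (p : NKVertex n (K + 1)) (t : Fin (K + 1)) : (sw p t).1 0 = p.1 t := by
  simp [sw]

theorem sw_self (p : NKVertex n (K + 1)) (t : Fin (K + 1)) : (sw p t).1 t = p.1 0 := by
  simp [sw]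

theorem sw_of_ne (p : NKVertex n (K + 1)) {t j : Fin (K + 1)} (h0 : j ≠ 0) (ht : j ≠ t) :
    (sw p t).1 j = p.1 j := by
  simp [sw, Equiv.swap_apply_of_ne_of_ne h0 ht]

theorem sw_sw (p : NKVertex n (K + 1)) (t : Fin (K + 1)) : sw (sw p t) t = p := by
  apply vext
  intro j
  simp [sw]

theorem sw_ne (p : NKVertex n (K + 1)) {t : Fin (K + 1)} (ht : t ≠ 0) : sw p t ≠ p := by
  intro h
  have h1 := sw_zero p t
  rw [h] at h1
  exact ht (p.2 h1).symm

theorem relabel_at (s : Fin n) (p : NKVertex n (K + 1)) (t : Fin (K + 1)) :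
    (relabel (p.1 t) s p).1 t = s := by
  simp [relabel]

theorem relabel_of_ne (s : Fin n) (p : NKVertex n (K + 1)) {t j : Fin (K + 1)} (hj : j ≠ t)
    (hs : p.1 j ≠ s) : (relabel (p.1 t) s p).1 j = p.1 j := by
  have : p.1 j ≠ p.1 t := fun h => hj (p.2 h)
  simp [relabel, Equiv.swap_apply_of_ne_of_ne this hs]

/-- Adjacency in the star graph: a swap, or agreement exactly off the first position. -/
theorem adj_iff (p q : NKVertex n (K + 1)) :
    (nkStar n (K + 1)).Adj p q ↔
      (∃ t, t ≠ 0 ∧ q = sw p t) ∨ (p ≠ q ∧ ∀ j, j ≠ 0 → q.1 j = p.1 j) := by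
  have key : ∀ p q : NKVertex n (K + 1), SwapRel p q ∨ UnswapRel p q →
      (∃ t, t ≠ 0 ∧ q = sw p t) ∨ (p ≠ q ∧ ∀ j, j ≠ 0 → q.1 j = p.1 j) := by
    rintro p q (⟨_, i, hi, h⟩ | ⟨_, h, h0⟩)
    · left
      refine ⟨i, fun h => hi (by simp [h]), Subtype.ext h⟩
    · right
      refine ⟨?_, fun j hj => h j (fun h => hj (Fin.ext h))⟩
      rintro rfl
      exact h0 ⟨_, rfl⟩
  unfold nkStar
  rw [SimpleGraph.fromRel_adj]
  constructor
  · rintro ⟨hne, h | h⟩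
    · exact key p q h
    · rcases key q p h with ⟨t, ht, rfl⟩ | ⟨h1, h2⟩
      · exact Or.inl ⟨t, ht, (sw_sw q t).symm⟩
      · exact Or.inr ⟨hne, fun j hj => (h2 j hj).symm⟩
  · rintro (⟨t, ht, rfl⟩ | ⟨hne, h⟩)
    · exact ⟨(sw_ne p ht).symm, Or.inl (Or.inl
        ⟨Nat.succ_pos _, t, fun h => ht (Fin.ext h), rfl⟩)⟩
    · refine ⟨hne, Or.inl (Or.inr ⟨Nat.succ_pos _,
        fun j hj => h j (fun h => hj (by simp [h])), ?_⟩)⟩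
      rintro ⟨j, hj⟩
      change p.1 j = q.1 0 at hj
      by_cases hj0 : j = 0
      · subst hj0
        apply hne
        apply vext
        intro i
        by_cases hi : i = 0
        · subst hi; exact hj
        · exact (h i hi).symm
      · rw [← h j hj0] at hj
        exact hj0 (q.2 hj)

theorem adj_sw (p : NKVertex n (K + 1)) {t : Fin (K + 1)} (ht : t ≠ 0) :
    (nkStar n (K + 1)).Adj p (sw p t) := (adj_iff _ _).2 (Or.inl ⟨t, ht, rfl⟩)

/-- The vertices agreeing with `q` outside the set `F` of free positions. For `0 ∈ F` this is a
copy of the `(n - c, k - c)`-star graph, `c` being the number of positions outside `F`. -/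
noncomputable def cell (F : Finset (Fin (K + 1))) (q : NKVertex n (K + 1)) :
    Finset (NKVertex n (K + 1)) :=
  univ.filter fun p => ∀ j, j ∉ F → p.1 j = q.1 j

/-- The symbols that `q` does not use outside `F`, i.e. those available at positions of `F`. -/
noncomputable def avail (F : Finset (Fin (K + 1))) (q : NKVertex n (K + 1)) : Finset (Fin n) :=
  univ.filter fun s => ∀ j, j ∉ F → q.1 j ≠ s

theorem mem_cell {F : Finset (Fin (K + 1))} {p q : NKVertex n (K + 1)} :
    p ∈ cell F q ↔ ∀ j, j ∉ F → p.1 j = q.1 j := by simp [cell]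

theorem mem_avail {F : Finset (Fin (K + 1))} {s : Fin n} {q : NKVertex n (K + 1)} :
    s ∈ avail F q ↔ ∀ j, j ∉ F → q.1 j ≠ s := by simp [avail]

theorem card_avail (hd : n = d + K + 1) (F : Finset (Fin (K + 1))) (q : NKVertex n (K + 1)) :
    #(avail F q) = d + #F := by
  have h1 : avail F q = (Fᶜ.image q.1)ᶜ := by
    ext s
    simp [mem_avail]
  rw [h1, card_compl, card_image_of_injective _ q.2, card_compl]
  have := card_le_univ F
  simp only [Fintype.card_fin] at *
  omega

theorem apply_mem_avail {F : Finset (Fin (K + 1))} {p q : NKVertex n (K + 1)} (hp : p ∈ cell F q)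
    {t : Fin (K + 1)} (ht : t ∈ F) : p.1 t ∈ avail F q := by
  rw [mem_avail]
  intro j hj h
  rw [← mem_cell.1 hp j hj] at h
  exact hj (p.2 h ▸ ht)

theorem relabel_mem {F : Finset (Fin (K + 1))} {p q : NKVertex n (K + 1)} (hp : p ∈ cell F q)
    {t : Fin (K + 1)} (ht : t ∈ F) {s : Fin n} (hs : s ∈ avail F q) :
    relabel (p.1 t) s p ∈ cell F q := by
  rw [mem_cell] at *
  intro j hj
  rw [relabel_of_ne _ _ (ne_of_mem_of_not_mem ht hj).symm, hp j hj]
  rw [hp j hj]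
  exact mem_avail.1 hs j hj

theorem self_mem_cell (F : Finset (Fin (K + 1))) (q : NKVertex n (K + 1)) : q ∈ cell F q :=
  mem_cell.2 fun _ _ => rfl

theorem sw_mem {F : Finset (Fin (K + 1))} {p q : NKVertex n (K + 1)} (hp : p ∈ cell F q)
    {t : Fin (K + 1)} (h0 : 0 ∈ F) (ht : t ∈ F) : sw p t ∈ cell F q := by
  rw [mem_cell] at *
  intro j hj
  rw [sw_of_ne _ (ne_of_mem_of_not_mem h0 hj).symm (ne_of_mem_of_not_mem ht hj).symm, hp j hj]

theorem cell_erase {F : Finset (Fin (K + 1))} {p q : NKVertex n (K + 1)} (hp : p ∈ cell F q)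
    (t : Fin (K + 1)) : cell (F.erase t) p = (cell F q).filter fun v => v.1 t = p.1 t := by
  rw [mem_cell] at hp
  ext v
  simp only [mem_cell, mem_filter, mem_erase, not_and]
  constructor
  · intro h
    refine ⟨fun j hj => (h j fun _ => hj).trans (hp j hj), h t fun h => absurd rfl h⟩
  · rintro ⟨h1, h2⟩ j hj
    by_cases hjt : j = t
    · subst hjt; exact h2
    · rw [h1 j (hj hjt), hp j (hj hjt)]

theorem card_cell_ge (hd : n = d + K + 1) {F : Finset (Fin (K + 1))} (hF : 1 ≤ #F)
    (q : NKVertex n (K + 1)) : d + #F ≤ #(cell F q) := by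
  obtain ⟨t, ht⟩ := card_pos.1 hF
  rw [← card_avail hd F q]
  refine card_le_card_of_injOn (fun s => relabel (q.1 t) s q)
    (fun s hs => relabel_mem (self_mem_cell F q) ht hs) ?_
  intro s _ s' _ h
  have := congrArg (fun v : NKVertex n (K + 1) => v.1 t) h
  simpa only [relabel_at] using this

theorem card_cell_ge_mul (hd : n = d + K + 1) {F : Finset (Fin (K + 1))} (hF : 2 ≤ #F)
    (q : NKVertex n (K + 1)) : (d + #F) * (d + #F - 1) ≤ #(cell F q) := by
  obtain ⟨t, ht⟩ := card_pos.1 (show 0 < #F by omega)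
  have h1 : #(cell F q) = ∑ s ∈ avail F q, #((cell F q).filter fun v => v.1 t = s) :=
    card_eq_sum_card_fiberwise fun v hv => apply_mem_avail hv ht
  rw [h1, ← card_avail hd F q, ← smul_eq_mul]
  apply card_nsmul_le_sum
  intro s hs
  have h2 := relabel_mem (self_mem_cell F q) ht hs
  have h3 := cell_erase h2 t
  rw [relabel_at] at h3
  rw [← h3, card_avail hd F q]
  have h4 := card_erase_of_mem ht
  refine le_trans ?_ (card_cell_ge hd (by omega) _)
  omega

/-! ### Cuts of a cell -/

/-- A cut of the cell `cell F q` into two nonempty sides `X` and `Y` without edges between them,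
both of minimum degree at least `h`; the separating set is `cell F q \ (X ∪ Y)`. -/
structure Cut (h : ℕ) (F : Finset (Fin (K + 1))) (q : NKVertex n (K + 1))
    (X Y : Finset (NKVertex n (K + 1))) : Prop where
  subX : X ⊆ cell F q
  subY : Y ⊆ cell F q
  disj : Disjoint X Y
  neX : X.Nonempty
  neY : Y.Nonempty
  nadj : ∀ x ∈ X, ∀ y ∈ Y, ¬ (nkStar n (K + 1)).Adj x y
  degX : ∀ x ∈ X, h ≤ #(X.filter fun v => (nkStar n (K + 1)).Adj x v)
  degY : ∀ y ∈ Y, h ≤ #(Y.filter fun v => (nkStar n (K + 1)).Adj y v)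

theorem Cut.symm {h : ℕ} {F : Finset (Fin (K + 1))} {q : NKVertex n (K + 1)}
    {X Y : Finset (NKVertex n (K + 1))} (C : Cut h F q X Y) : Cut h F q Y X where
  subX := C.subY
  subY := C.subX
  disj := C.disj.symm
  neX := C.neY
  neY := C.neX
  nadj := fun x hx y hy hadj => C.nadj y hy x hx hadj.symm
  degX := C.degY
  degY := C.degX

/-- Fixing the symbol at position `t ≠ 0` lowers degrees by at most one: the only neighbour of a
vertex with a different symbol at `t` is its swap with position `t`. -/
theorem deg_fix {X : Finset (NKVertex n (K + 1))} {x : NKVertex n (K + 1)} {t : Fin (K + 1)}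
    (ht : t ≠ 0) {h : ℕ} (hx : h ≤ #(X.filter fun v => (nkStar n (K + 1)).Adj x v)) :
    h - 1 ≤ #((X.filter fun v => v.1 t = x.1 t).filter fun v => (nkStar n (K + 1)).Adj x v) := by
  have h1 : (X.filter fun v => (nkStar n (K + 1)).Adj x v) ⊆
      insert (sw x t)
        ((X.filter fun v => v.1 t = x.1 t).filter fun v => (nkStar n (K + 1)).Adj x v) := by
    intro v hv
    simp only [mem_filter, mem_insert] at hv ⊢
    by_cases hvt : v = sw x t
    · exact Or.inl hvt
    · right
      refine ⟨⟨hv.1, ?_⟩, hv.2⟩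
      rcases (adj_iff _ _).1 hv.2 with ⟨u, hu, rfl⟩ | ⟨_, h2⟩
      · apply sw_of_ne _ ht
        rintro rfl
        exact hvt rfl
      · exact h2 t ht
  have h2 := card_le_card h1
  have h3 := card_insert_le (sw x t)
    ((X.filter fun v => v.1 t = x.1 t).filter fun v => (nkStar n (K + 1)).Adj x v)
  omega

theorem Cut.restrict {h : ℕ} {F : Finset (Fin (K + 1))} {q : NKVertex n (K + 1)}
    {X Y : Finset (NKVertex n (K + 1))} (C : Cut h F q X Y) {t : Fin (K + 1)} (ht : t ≠ 0)
    {x y : NKVertex n (K + 1)} (hx : x ∈ X) (hy : y ∈ Y) (hxy : y.1 t = x.1 t) :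
    Cut (h - 1) (F.erase t) x (X.filter fun v => v.1 t = x.1 t)
      (Y.filter fun v => v.1 t = x.1 t) where
  subX := by
    rw [cell_erase (C.subX hx) t]
    exact filter_subset_filter _ C.subX
  subY := by
    rw [cell_erase (C.subX hx) t]
    exact filter_subset_filter _ C.subY
  disj := disjoint_filter_filter C.disj
  neX := ⟨x, by simp [hx]⟩
  neY := ⟨y, by simp [hy, hxy]⟩
  nadj := fun a ha b hb => C.nadj a (mem_filter.1 ha).1 b (mem_filter.1 hb).1
  degX := by
    intro v hv
    rw [mem_filter] at hv
    rw [← hv.2]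
    exact deg_fix ht (C.degX v hv.1)
  degY := by
    intro v hv
    rw [mem_filter] at hv
    rw [← hv.2]
    exact deg_fix ht (C.degY v hv.1)

/-- Edges between the copies with symbol in `A` and those with symbol in `B` at position `t` form a
matching. If `Y` avoids the former and `X` the latter, each matching edge meets the separating
set. -/
theorem Cut.cross {h : ℕ} {F : Finset (Fin (K + 1))} {q : NKVertex n (K + 1)}
    {X Y : Finset (NKVertex n (K + 1))} (C : Cut h F q X Y) {t : Fin (K + 1)} (ht : t ≠ 0)
    (h0 : 0 ∈ F) (htF : t ∈ F) {A B : Finset (Fin n)} (hAB : Disjoint A B)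
    (hA : ∀ y ∈ Y, y.1 t ∉ A) (hB : ∀ x ∈ X, x.1 t ∉ B) :
    #((cell F q).filter fun p => p.1 t ∈ A ∧ p.1 0 ∈ B) ≤
      #((cell F q \ (X ∪ Y)).filter fun v => v.1 t ∈ A ∪ B) := by
  refine card_le_card_of_injOn (fun p => if p ∈ X then sw p t else p) ?_ ?_
  · intro p hp
    simp only [coe_filter, Set.mem_ofPred_eq, mem_sdiff, mem_union, not_or] at hp ⊢
    obtain ⟨hp, hpA, hpB⟩ := hp
    split_ifs with hpX
    · refine ⟨⟨sw_mem hp h0 htF, ?_, ?_⟩, ?_⟩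
      · intro h1
        apply hB _ h1
        rwa [sw_self]
      · intro h1
        exact C.nadj _ hpX _ h1 (adj_sw p ht)
      · right
        rwa [sw_self]
    · exact ⟨⟨hp, hpX, fun h1 => hA _ h1 hpA⟩, Or.inl hpA⟩
  · intro p hp p' hp' hpp
    simp only [coe_filter, Set.mem_ofPred_eq] at hp hp'
    have hne : ∀ u v : NKVertex n (K + 1), u.1 t ∈ A → v.1 0 ∈ B → u ≠ sw v t := by
      rintro u v hu hv rfl
      rw [sw_self] at hu
      exact (disjoint_left.1 hAB hu) hv
    simp only at hpp
    split_ifs at hpp with h1 h2 h2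
    · rw [← sw_sw p t, hpp, sw_sw]
    · exact absurd hpp.symm (hne _ _ hp'.2.1 hp.2.2)
    · exact absurd hpp (hne _ _ hp.2.1 hp'.2.2)
    · exact hpp

/-- A lower bound for the number of matching edges counted in `Cut.cross`: `c` of them for each
pair of symbols in `A × B`. -/
theorem card_cross_ge {F : Finset (Fin (K + 1))} {q : NKVertex n (K + 1)} {t : Fin (K + 1)}
    (ht : t ≠ 0) (h0 : 0 ∈ F) (htF : t ∈ F) {A B : Finset (Fin n)} (hAB : Disjoint A B)
    (hA : A ⊆ avail F q) (hB : B ⊆ avail F q) {c : ℕ}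
    (hc : ∀ r : NKVertex n (K + 1), c ≤ #(cell ((F.erase t).erase 0) r)) :
    #A * #B * c ≤ #((cell F q).filter fun p => p.1 t ∈ A ∧ p.1 0 ∈ B) := by
  have h1 := card_eq_sum_card_fiberwise
    (s := (cell F q).filter fun p => p.1 t ∈ A ∧ p.1 0 ∈ B) (t := A ×ˢ B)
    (f := fun p => (p.1 t, p.1 0)) (by
      intro p hp
      simp only [coe_filter, Set.mem_ofPred_eq] at hp
      simp [hp.2])
  rw [h1, ← card_product, ← smul_eq_mul]
  apply card_nsmul_le_sum
  rintro ⟨a, b⟩ hab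
  obtain ⟨ha, hb⟩ := mem_product.1 hab
  simp only at ha hb
  have hne : a ≠ b := fun h => disjoint_left.1 hAB ha (h ▸ hb)
  have hr1 := relabel_mem (self_mem_cell F q) htF (hA ha)
  have hr1t := relabel_at a q t
  generalize relabel (q.1 t) a q = r1 at hr1 hr1t
  have hr2 := relabel_mem hr1 h0 (hB hb)
  have hr20 := relabel_at b r1 0
  have hr2t := relabel_of_ne b r1 ht (by rwa [hr1t])
  rw [hr1t] at hr2t
  generalize relabel (r1.1 0) b r1 = r2 at hr2 hr20 hr2t
  refine (hc r2).trans (card_le_card ?_)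
  have hr3 : r2 ∈ cell (F.erase t) r2 := self_mem_cell _ _
  rw [cell_erase hr3 0, cell_erase hr2 t, hr20, hr2t]
  intro v hv
  simp only [mem_filter] at hv ⊢
  refine ⟨⟨hv.1.1, ?_, ?_⟩, ?_⟩
  · rw [hv.1.2]; exact ha
  · rw [hv.2]; exact hb
  · rw [hv.1.2, hv.2]

/-! ### The inductive lower bound -/

theorem arith_two {h m : ℕ} (h2 : h ≤ 2) (hd : h ≤ d) (hm : 2 ≤ m) :
    d + m + h * (m - 1) ≤ 2 * (d + (m - 1) + (h - 1) * (m - 2)) := by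
  obtain ⟨l, rfl⟩ := Nat.exists_eq_add_of_le' hm
  interval_cases h <;> simp <;> omega

theorem arith_one {h m : ℕ} (h2 : h ≤ 2) (hd : h ≤ d) (hm : 2 ≤ m) :
    d + m + h * (m - 1) ≤ d + (m - 1) + (h - 1) * (m - 2) + (d + (m - 1)) := by
  obtain ⟨l, rfl⟩ := Nat.exists_eq_add_of_le' hm
  interval_cases h <;> simp <;> omega

theorem arith_mul {h m : ℕ} (hd : h ≤ d) (hm : 2 ≤ m) :
    d + m + h * (m - 1) ≤ (d + m) * (d + m - 1) := by
  obtain ⟨l, rfl⟩ := Nat.exists_eq_add_of_le' hm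
  have h1 : d + (l + 2) - 1 = d + l + 1 := by omega
  have h2 : l + 2 - 1 = l + 1 := by omega
  rw [h1, h2]
  nlinarith [Nat.mul_le_mul_right (l + 1) hd, Nat.zero_le (d * d), Nat.zero_le (d * l)]

theorem cell_fix_sdiff {F : Finset (Fin (K + 1))} {q x : NKVertex n (K + 1)}
    (X Y : Finset (NKVertex n (K + 1))) (hx : x ∈ cell F q) (t : Fin (K + 1)) :
    cell (F.erase t) x \ ((X.filter fun v => v.1 t = x.1 t) ∪ (Y.filter fun v => v.1 t = x.1 t)) =
      (cell F q \ (X ∪ Y)).filter fun v => v.1 t = x.1 t := by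
  rw [cell_erase hx t]
  ext v
  simp only [mem_sdiff, mem_union, mem_filter]
  tauto

theorem two_fibres {T : Finset (NKVertex n (K + 1))} (t : Fin (K + 1)) {A B : Finset (Fin n)}
    (hAB : Disjoint A B) :
    #(T.filter fun v => v.1 t ∈ A) + #(T.filter fun v => v.1 t ∈ B) ≤ #T := by
  rw [← card_union_of_disjoint]
  · exact card_le_card (union_subset (filter_subset _ _) (filter_subset _ _))
  · rw [disjoint_filter]
    exact fun v _ h1 h2 => disjoint_left.1 hAB h1 h2

/-- Splitting a cell into copies according to the symbol at position `t`: either the separating set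
is large enough, or some copy contains a whole side and a known share of the separating set.
A copy meeting both sides is cut, with degrees lowered by one, so `IH` applies to it. Two such
copies suffice; one such copy suffices together with a matching between an `X`-only and a `Y`-only
copy; with no such copy, either a copy lies wholly in the separating set or all the matchings
between `X`-copies and `Y`-copies count. -/
theorem Cut.step (hd : n = d + K + 1) {m h : ℕ} {F : Finset (Fin (K + 1))}
    {q : NKVertex n (K + 1)} {X Y : Finset (NKVertex n (K + 1))} (h2 : h ≤ 2) (hhd : h ≤ d)
    (h0 : 0 ∈ F) (hF : #F = m + 1) (C : Cut h F q X Y) {t : Fin (K + 1)} (ht : t ≠ 0)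
    (htF : t ∈ F)
    (IH : ∀ (q' : NKVertex n (K + 1)) X' Y', Cut (h - 1) (F.erase t) q' X' Y' → 2 ≤ m ∧
      d + (m - 1) + (h - 1) * (m - 2) ≤ #(cell (F.erase t) q' \ (X' ∪ Y'))) :
    d + m + h * (m - 1) ≤ #(cell F q \ (X ∪ Y)) ∨
      ∃ i, 2 ≤ m ∧
        d + (m - 1) + (h - 1) * (m - 2) ≤
          #((cell F q \ (X ∪ Y)).filter fun v => v.1 t ∈ ({i} : Finset (Fin n))) ∧
        ((∀ y ∈ Y, y.1 t = i) ∨ (∀ x ∈ X, x.1 t = i)) := by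
  have IH' : ∀ i, (∃ x ∈ X, x.1 t = i) → (∃ y ∈ Y, y.1 t = i) → 2 ≤ m ∧
      d + (m - 1) + (h - 1) * (m - 2) ≤
        #((cell F q \ (X ∪ Y)).filter fun v => v.1 t ∈ ({i} : Finset (Fin n))) := by
    rintro _ ⟨x, hx, rfl⟩ ⟨y, hy, hxy⟩
    have h1 := IH _ _ _ (C.restrict ht hx hy hxy)
    rw [cell_fix_sdiff X Y (C.subX hx) t] at h1
    simpa only [mem_singleton] using h1
  have hFt : #(F.erase t) = m := by rw [card_erase_of_mem htF, hF]; rfl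
  have h0t : (0 : Fin (K + 1)) ∈ F.erase t := mem_erase.2 ⟨ht.symm, h0⟩
  have hFt0 : #((F.erase t).erase 0) = m - 1 := by rw [card_erase_of_mem h0t, hFt]
  have hm1 : 1 ≤ m := by
    have := card_pos.2 ⟨_, h0t⟩
    omega
  by_cases hJ : ∃ i, (∃ x ∈ X, x.1 t = i) ∧ (∃ y ∈ Y, y.1 t = i)
  · obtain ⟨i, hiX, hiY⟩ := hJ
    obtain ⟨hm, hTi⟩ := IH' i hiX hiY
    by_cases hone : (∀ y ∈ Y, y.1 t = i) ∨ (∀ x ∈ X, x.1 t = i)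
    · exact Or.inr ⟨i, hm, hTi, hone⟩
    left
    push Not at hone
    obtain ⟨⟨y, hy, hyi⟩, ⟨x, hx, hxi⟩⟩ := hone
    have twice : ∀ j, j ≠ i → (∃ x ∈ X, x.1 t = j) → (∃ y ∈ Y, y.1 t = j) →
        d + m + h * (m - 1) ≤ #(cell F q \ (X ∪ Y)) := by
      intro j hji hjX hjY
      have h3 := (IH' j hjX hjY).2
      have h4 := two_fibres (T := cell F q \ (X ∪ Y)) t (A := {j}) (B := {i}) (by simpa using hji)
      have h5 := arith_two h2 hhd hm
      omega
    by_cases hjY : ∃ y' ∈ Y, y'.1 t = x.1 t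
    · exact twice _ hxi ⟨x, hx, rfl⟩ hjY
    by_cases hlX : ∃ x' ∈ X, x'.1 t = y.1 t
    · exact twice _ hyi hlX ⟨y, hy, rfl⟩
    have hne : x.1 t ≠ y.1 t := fun h => hlX ⟨x, hx, h⟩
    have hdisj : Disjoint ({x.1 t} : Finset (Fin n)) {y.1 t} := by simpa using hne
    have h3 := C.cross ht h0 htF hdisj
      (fun y' hy' h => hjY ⟨y', hy', by simpa using h⟩)
      (fun x' hx' h => hlX ⟨x', hx', by simpa using h⟩)
    have h4 := card_cross_ge (q := q) ht h0 htF hdisj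
      (by simpa using apply_mem_avail (C.subX hx) htF)
      (by simpa using apply_mem_avail (C.subY hy) htF)
      (c := d + (m - 1)) (fun r => by
        have := card_cell_ge hd (F := (F.erase t).erase 0) (by omega) r
        rwa [hFt0] at this)
    have h5 := two_fibres (T := cell F q \ (X ∪ Y)) t (A := {i}) (B := {x.1 t} ∪ {y.1 t}) (by
      simp [Ne.symm hxi, Ne.symm hyi])
    have h6 := arith_one h2 hhd hm
    simp only [card_singleton, one_mul] at h4
    omega
  · left
    have hdisj : Disjoint (X.image fun v => v.1 t) (Y.image fun v => v.1 t) := by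
      rw [disjoint_left]
      intro i hi hi'
      exact hJ ⟨i, by simpa using hi, by simpa using hi'⟩
    by_cases hnone : ∃ s ∈ avail F q, s ∉ (X.image fun v => v.1 t) ∪ (Y.image fun v => v.1 t)
    · obtain ⟨s, hs, hs'⟩ := hnone
      have hr := relabel_mem (self_mem_cell F q) htF hs
      have hrt := relabel_at s q t
      generalize relabel (q.1 t) s q = r at hr hrt
      have h3 : cell (F.erase t) r ⊆ cell F q \ (X ∪ Y) := by
        rw [cell_erase hr t]
        intro v hv
        rw [mem_filter, hrt] at hv
        simp only [mem_union, mem_image, not_or, not_exists, not_and] at hs'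
        simp only [mem_sdiff, mem_union, not_or]
        exact ⟨hv.1, fun h => hs'.1 v h hv.2, fun h => hs'.2 v h hv.2⟩
      refine le_trans ?_ (card_le_card h3)
      rcases Nat.lt_or_ge m 2 with hm | hm
      · obtain rfl : m = 1 := by omega
        have := card_cell_ge hd (F := F.erase t) (by omega) r
        rw [hFt] at this
        simpa using this
      · have := card_cell_ge_mul hd (F := F.erase t) (by omega) r
        rw [hFt] at this
        exact (arith_mul hhd hm).trans this
    · push Not at hnone
      have hsub : avail F q ⊆ (X.image fun v => v.1 t) ∪ (Y.image fun v => v.1 t) := hnone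
      have hc := (card_le_card hsub).trans (card_union_le _ _)
      rw [card_avail hd F q, hF] at hc
      have hA1 := card_pos.2 (C.neX.image fun v => v.1 t)
      have hB1 := card_pos.2 (C.neY.image fun v => v.1 t)
      have h3 := C.cross ht h0 htF hdisj
        (fun y hy h => disjoint_left.1 hdisj h (mem_image_of_mem _ hy))
        (fun x hx h => disjoint_left.1 hdisj (mem_image_of_mem _ hx) h)
      have hAs : (X.image fun v => v.1 t) ⊆ avail F q := by
        intro s hs
        obtain ⟨x, hx, rfl⟩ := mem_image.1 hs
        exact apply_mem_avail (C.subX hx) htF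
      have hBs : (Y.image fun v => v.1 t) ⊆ avail F q := by
        intro s hs
        obtain ⟨x, hx, rfl⟩ := mem_image.1 hs
        exact apply_mem_avail (C.subY hx) htF
      have h4 : ∀ c, (∀ r : NKVertex n (K + 1), c ≤ #(cell ((F.erase t).erase 0) r)) →
          _ := fun c hc => card_cross_ge (q := q) ht h0 htF hdisj hAs hBs hc
      have h5 := card_filter_le (cell F q \ (X ∪ Y))
        (fun v => v.1 t ∈ (X.image fun v => v.1 t) ∪ (Y.image fun v => v.1 t))
      generalize #(X.image fun v => v.1 t) = a at *
      generalize #(Y.image fun v => v.1 t) = b at *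
      have hab : d + m ≤ a * b := by
        obtain ⟨a, rfl⟩ := Nat.exists_eq_add_of_le' hA1
        obtain ⟨b, rfl⟩ := Nat.exists_eq_add_of_le' hB1
        nlinarith [Nat.zero_le (a * b)]
      rcases Nat.lt_or_ge m 2 with hm | hm
      · obtain rfl : m = 1 := by omega
        have := h4 1 (fun r => card_pos.2 ⟨r, self_mem_cell _ _⟩)
        simp only [mul_one] at this
        simp only [Nat.sub_self, mul_zero, add_zero]
        omega
      · have h6 := h4 (d + (m - 1)) (fun r => by
          have := card_cell_ge hd (F := (F.erase t).erase 0) (by omega) r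
          rwa [hFt0] at this)
        have h7 := arith_mul hhd hm
        have h8 := Nat.mul_le_mul_right (d + (m - 1)) hab
        rw [show d + m - 1 = d + (m - 1) by omega] at h7
        omega

/-- If `X` lies in a single clique of unswap-edges, the rest of the clique and the pairwise distinct
swap-neighbours of `X` all belong to the separating set. -/
theorem Cut.clique (hd : n = d + K + 1) {m h : ℕ} {F : Finset (Fin (K + 1))}
    {q : NKVertex n (K + 1)} {X Y : Finset (NKVertex n (K + 1))}
    (h0 : 0 ∈ F) (hF : #F = m + 1) (hm : 1 ≤ m) (C : Cut h F q X Y)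
    (hX : ∀ x ∈ X, ∀ x' ∈ X, ∀ t ∈ F, t ≠ 0 → x.1 t = x'.1 t) :
    d + m + h * (m - 1) ≤ #(cell F q \ (X ∪ Y)) := by
  obtain ⟨x0, hx0⟩ := C.neX
  have hag : ∀ x ∈ X, ∀ j, j ≠ 0 → x.1 j = x0.1 j := by
    intro x hx j hj
    by_cases hjF : j ∈ F
    · exact hX x hx x0 hx0 j hjF hj
    · rw [mem_cell.1 (C.subX hx) j hjF, mem_cell.1 (C.subX hx0) j hjF]
  have hXcard : h + 1 ≤ #X := by
    have h1 : (X.filter fun v => (nkStar n (K + 1)).Adj x0 v) ⊆ X.erase x0 := by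
      intro v hv
      rw [mem_filter] at hv
      exact mem_erase.2 ⟨hv.2.ne', hv.1⟩
    have h2 := card_le_card h1
    have h3 := C.degX x0 hx0
    have h4 := card_erase_add_one hx0
    omega
  have hQ : d + 1 ≤ #(cell {0} x0) := by
    simpa using card_cell_ge hd (F := {0}) (by simp) x0
  have hQX := le_card_sdiff X (cell {0} x0)
  have hQT : cell {0} x0 \ X ⊆ cell F q \ (X ∪ Y) := by
    intro v hv
    rw [mem_sdiff, mem_cell] at hv
    have hv1 : ∀ j, j ≠ 0 → v.1 j = x0.1 j := fun j hj => hv.1 j (by simpa using hj)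
    simp only [mem_sdiff, mem_union, not_or]
    refine ⟨mem_cell.2 fun j hj => ?_, hv.2, fun hvY => C.nadj x0 hx0 v hvY ?_⟩
    · rw [hv1 j (ne_of_mem_of_not_mem h0 hj).symm, mem_cell.1 (C.subX hx0) j hj]
    · refine (adj_iff _ _).2 (Or.inr ⟨?_, hv1⟩)
      rintro rfl
      exact hv.2 hx0
  have hsw : ∀ x ∈ X, ∀ t, t ≠ 0 → (sw x t).1 t ≠ x0.1 t := by
    intro x hx t ht h
    rw [sw_self, ← hag x hx t ht] at h
    exact ht (x.2 h).symm
  have hIT : (X ×ˢ F.erase 0).image (fun a => sw a.1 a.2) ⊆ cell F q \ (X ∪ Y) := by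
    intro v hv
    obtain ⟨⟨x, t⟩, hxt, rfl⟩ := mem_image.1 hv
    obtain ⟨hx, ht⟩ := mem_product.1 hxt
    simp only [mem_erase] at hx ht
    simp only [mem_sdiff, mem_union, not_or]
    refine ⟨sw_mem (C.subX hx) h0 ht.2, fun h => ?_, fun h => C.nadj x hx _ h (adj_sw x ht.1)⟩
    exact hsw x hx t ht.1 (hag _ h t ht.1)
  have hI : #((X ×ˢ F.erase 0).image (fun a => sw a.1 a.2)) = #X * m := by
    rw [card_image_of_injOn, card_product, card_erase_of_mem h0, hF, Nat.add_sub_cancel]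
    rintro ⟨x, t⟩ hxt ⟨x', t'⟩ hxt' heq
    obtain ⟨hx, ht⟩ := mem_product.1 hxt
    obtain ⟨hx', ht'⟩ := mem_product.1 hxt'
    simp only [mem_erase] at hx ht hx' ht' heq
    by_cases htt : t = t'
    · subst htt
      have := congrArg (fun v => sw v t) heq
      simp only [sw_sw] at this
      rw [this]
    · exfalso
      apply hsw x hx t ht.1
      rw [heq, sw_of_ne _ ht.1 htt, hag _ hx' t ht.1]
  have hdisj : Disjoint (cell {0} x0 \ X) ((X ×ˢ F.erase 0).image (fun a => sw a.1 a.2)) := by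
    rw [disjoint_right]
    intro v hv hv'
    obtain ⟨⟨x, t⟩, hxt, rfl⟩ := mem_image.1 hv
    obtain ⟨hx, ht⟩ := mem_product.1 hxt
    simp only [mem_erase] at hx ht
    rw [mem_sdiff, mem_cell] at hv'
    exact hsw x hx t ht.1 (hv'.1 t (by simpa using ht.1))
  have h1 := card_le_card (union_subset hQT hIT)
  rw [card_union_of_disjoint hdisj, hI] at h1
  obtain ⟨l, rfl⟩ := Nat.exists_eq_add_of_le' hm
  have h2 := Nat.mul_le_mul_right l hXcard
  rw [mul_add, mul_one] at h1
  rw [add_mul, one_mul] at h2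
  rw [Nat.add_sub_cancel]
  omega

/-- The lower bound for cuts of a cell with `m + 1` free positions. In the induction step each side
spans several copies at some position; if for both these positions the opposite side stays in a
single copy, the vertices lying outside both copies all belong to the separating set. -/
theorem Cut.bound (hd : n = d + K + 1) : ∀ (m h : ℕ) (F : Finset (Fin (K + 1)))
    (q : NKVertex n (K + 1)) (X Y : Finset (NKVertex n (K + 1))), h ≤ 2 → h ≤ d → 0 ∈ F →
    #F = m + 1 → Cut h F q X Y →
    1 ≤ m ∧ d + m + h * (m - 1) ≤ #(cell F q \ (X ∪ Y)) := by
  intro m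
  induction m with
  | zero =>
    intro h F q X Y _ _ h0 hF C
    exfalso
    obtain ⟨x, hx⟩ := C.neX
    obtain ⟨y, hy⟩ := C.neY
    obtain ⟨a, rfl⟩ := card_eq_one.1 hF
    obtain rfl : 0 = a := by simpa using h0
    refine C.nadj x hx y hy ((adj_iff _ _).2 (Or.inr ⟨?_, fun j hj => ?_⟩))
    · rintro rfl
      exact disjoint_left.1 C.disj hx hy
    · rw [mem_cell.1 (C.subX hx) j (by simpa using hj),
        mem_cell.1 (C.subY hy) j (by simpa using hj)]
  | succ m IH =>
    intro h F q X Y h2 hhd h0 hF C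
    refine ⟨by omega, ?_⟩
    have IH' : ∀ t ∈ F, t ≠ 0 → ∀ (q' : NKVertex n (K + 1)) X' Y',
        Cut (h - 1) (F.erase t) q' X' Y' → 2 ≤ m + 1 ∧
        d + (m + 1 - 1) + (h - 1) * (m + 1 - 2) ≤ #(cell (F.erase t) q' \ (X' ∪ Y')) := by
      intro t htF ht q' X' Y' C'
      have h3 := IH (h - 1) (F.erase t) q' X' Y' (by omega) (by omega)
        (mem_erase.2 ⟨ht.symm, h0⟩) (by rw [card_erase_of_mem htF, hF]; rfl) C'
      exact ⟨by omega, h3.2⟩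
    by_cases hX : ∀ x ∈ X, ∀ x' ∈ X, ∀ t ∈ F, t ≠ 0 → x.1 t = x'.1 t
    · exact C.clique hd h0 hF (by omega) hX
    by_cases hY : ∀ x ∈ Y, ∀ x' ∈ Y, ∀ t ∈ F, t ≠ 0 → x.1 t = x'.1 t
    · have := C.symm.clique hd h0 hF (by omega) hY
      rwa [union_comm] at this
    push Not at hX hY
    obtain ⟨x1, hx1, x2, hx2, t, htF, ht, hx12⟩ := hX
    obtain ⟨y1, hy1, y2, hy2, u, huF, hu, hy12⟩ := hY
    rcases C.step hd h2 hhd h0 hF ht htF (IH' t htF ht) with h3 | ⟨i, hm, hTi, hi⟩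
    · exact h3
    rcases C.step hd h2 hhd h0 hF hu huF (IH' u huF hu) with h3 | ⟨j, -, -, hj⟩
    · exact h3
    have hi : ∀ y ∈ Y, y.1 t = i := by
      rcases hi with hi | hi
      · exact hi
      · exact absurd ((hi x1 hx1).trans (hi x2 hx2).symm) hx12
    have hj : ∀ x ∈ X, x.1 u = j := by
      rcases hj with hj | hj
      · exact absurd ((hj y1 hy1).trans (hj y2 hy2).symm) hy12
      · exact hj
    have htu : t ≠ u := by
      rintro rfl
      exact hx12 ((hj x1 hx1).trans (hj x2 hx2).symm)
    obtain ⟨x, hx, hxi⟩ : ∃ x ∈ X, x.1 t ≠ i := by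
      by_contra! hcon
      exact hx12 ((hcon x1 hx1).trans (hcon x2 hx2).symm)
    have hv := sw_mem (C.subX hx) h0 huF
    have hvt : (sw x u).1 t ≠ i := by rwa [sw_of_ne _ ht htu]
    have hvu : (sw x u).1 u ≠ j := by
      rw [sw_self, ← hj x hx]
      exact fun h => hu (x.2 h).symm
    generalize sw x u = v at hv hvt hvu
    have hsub : cell ((F.erase t).erase u) v ⊆
        (cell F q \ (X ∪ Y)).filter fun w => w.1 t ∈ ({v.1 t} : Finset (Fin n)) := by
      rw [cell_erase (self_mem_cell (F.erase t) v) u, cell_erase hv t]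
      intro w hw
      simp only [mem_filter, mem_sdiff, mem_union, not_or, mem_singleton] at hw ⊢
      refine ⟨⟨hw.1.1, fun h => hvu ?_, fun h => hvt ?_⟩, hw.1.2⟩
      · rw [← hw.2, hj w h]
      · rw [← hw.1.2, hi w h]
    have hcF : #((F.erase t).erase u) = m := by
      rw [card_erase_of_mem (mem_erase.2 ⟨htu.symm, huF⟩), card_erase_of_mem htF, hF]
      rfl
    have h3 := card_cell_ge hd (F := (F.erase t).erase u) (by omega) v
    rw [hcF] at h3
    have h4 := card_le_card hsub
    have h5 := two_fibres (T := cell F q \ (X ∪ Y)) t (A := {i}) (B := {v.1 t})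
      (by simpa using Ne.symm hvt)
    have h6 := arith_one h2 hhd hm
    simp only [Nat.add_sub_cancel] at h6 hTi ⊢
    omega

/-! ### Lower bound for super vertex-cuts -/

theorem le_ncard_of_isHSuperCut (hd : n = d + K + 1) (hd2 : 2 ≤ d) (hK : 1 ≤ K)
    {S : Set (NKVertex n (K + 1))} (hS : IsHSuperCut (nkStar n (K + 1)) 2 S) :
    d + K + 2 * (K - 1) ≤ S.ncard := by
  have q : NKVertex n (K + 1) :=
    ⟨Fin.castLE (by omega), Fin.castLE_injective _⟩
  have hcell : cell univ q = univ := by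
    ext v
    simp [mem_cell]
  obtain ⟨hcon, hdeg⟩ := hS
  by_cases hne : Nonempty (Sᶜ : Set (NKVertex n (K + 1)))
  · have hpre : ¬ ((nkStar n (K + 1)).induce Sᶜ).Preconnected := fun h => hcon ⟨h⟩
    unfold SimpleGraph.Preconnected at hpre
    push Not at hpre
    obtain ⟨u, v, huv⟩ := hpre
    let X : Finset (NKVertex n (K + 1)) :=
      univ.filter fun w => ∃ hw : w ∈ Sᶜ, ((nkStar n (K + 1)).induce Sᶜ).Reachable u ⟨w, hw⟩
    let Y : Finset (NKVertex n (K + 1)) :=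
      univ.filter fun w => ∃ hw : w ∈ Sᶜ, ¬ ((nkStar n (K + 1)).induce Sᶜ).Reachable u ⟨w, hw⟩
    have hX : ∀ w, w ∈ X ↔
        ∃ hw : w ∈ Sᶜ, ((nkStar n (K + 1)).induce Sᶜ).Reachable u ⟨w, hw⟩ := by simp [X]
    have hY : ∀ w, w ∈ Y ↔
        ∃ hw : w ∈ Sᶜ, ¬ ((nkStar n (K + 1)).induce Sᶜ).Reachable u ⟨w, hw⟩ := by simp [Y]
    have hstep : ∀ a b, (ha : a ∈ Sᶜ) → (hb : b ∈ Sᶜ) → (nkStar n (K + 1)).Adj a b →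
        (((nkStar n (K + 1)).induce Sᶜ).Reachable u ⟨a, ha⟩ ↔
          ((nkStar n (K + 1)).induce Sᶜ).Reachable u ⟨b, hb⟩) := by
      intro a b ha hb hab
      have h1 : ((nkStar n (K + 1)).induce Sᶜ).Adj ⟨a, ha⟩ ⟨b, hb⟩ := hab
      exact ⟨fun h => h.trans h1.reachable, fun h => h.trans h1.symm.reachable⟩
    have C : Cut 2 univ q X Y :=
      { subX := by rw [hcell]; exact subset_univ _
        subY := by rw [hcell]; exact subset_univ _
        disj := by
          rw [disjoint_left]
          intro w h1 h2
          obtain ⟨_, h1⟩ := (hX w).1 h1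
          obtain ⟨_, h2⟩ := (hY w).1 h2
          exact h2 h1
        neX := ⟨u, (hX _).2 ⟨u.2, SimpleGraph.Reachable.refl _⟩⟩
        neY := ⟨v, (hY _).2 ⟨v.2, huv⟩⟩
        nadj := by
          intro a ha b hb hab
          obtain ⟨ha, h1⟩ := (hX a).1 ha
          obtain ⟨hb, h2⟩ := (hY b).1 hb
          exact h2 ((hstep a b ha hb hab).1 h1)
        degX := by
          intro a ha
          obtain ⟨ha, h1⟩ := (hX a).1 ha
          refine (hdeg a ha).trans ?_
          rw [← Set.ncard_coe_finset]
          refine Set.ncard_le_ncard ?_ (Set.toFinite _)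
          rintro b ⟨hb1, hb2⟩
          simp only [coe_filter, Set.mem_ofPred_eq]
          exact ⟨(hX b).2 ⟨hb2, (hstep a b ha hb2 hb1).1 h1⟩, hb1⟩
        degY := by
          intro a ha
          obtain ⟨ha, h1⟩ := (hY a).1 ha
          refine (hdeg a ha).trans ?_
          rw [← Set.ncard_coe_finset]
          refine Set.ncard_le_ncard ?_ (Set.toFinite _)
          rintro b ⟨hb1, hb2⟩
          simp only [coe_filter, Set.mem_ofPred_eq]
          exact ⟨(hY b).2 ⟨hb2, fun h => h1 ((hstep a b ha hb2 hb1).2 h)⟩, hb1⟩ }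
    have h1 := (Cut.bound hd K 2 univ q X Y le_rfl hd2 (mem_univ _) (by simp) C).2
    refine h1.trans ?_
    rw [← Set.ncard_coe_finset]
    refine Set.ncard_le_ncard ?_ (Set.toFinite _)
    intro w hw
    by_contra hwS
    simp only [coe_sdiff, coe_union, Set.mem_sdiff, Set.mem_union, mem_coe, not_or] at hw
    by_cases hr : ((nkStar n (K + 1)).induce Sᶜ).Reachable u ⟨w, hwS⟩
    · exact hw.2.1 ((hX w).2 ⟨hwS, hr⟩)
    · exact hw.2.2 ((hY w).2 ⟨hwS, hr⟩)
  -- Without remaining vertices, `S` consists of all vertices.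
  · have hSu : S = Set.univ := by
      rw [← Set.compl_empty_iff, ← Set.not_nonempty_iff_eq_empty, ← Set.nonempty_coe_sort]
      exact hne
    have h1 := card_cell_ge_mul hd (F := univ) (by simp; omega) q
    rw [hSu, Set.ncard_univ, Nat.card_eq_fintype_card, ← card_univ, ← hcell]
    refine le_trans ?_ h1
    simp only [card_univ, Fintype.card_fin]
    obtain ⟨l, rfl⟩ := Nat.exists_eq_add_of_le' hK
    rw [show d + (l + 1 + 1) - 1 = d + l + 1 by omega, Nat.add_sub_cancel]
    nlinarith [Nat.zero_le (d * d), Nat.zero_le (d * l), Nat.zero_le (l * l)]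

/-! ### A minimum cut -/

/-- The neighbourhood `S` of a triangle of unswap-edges is a `2`-super vertex-cut. A vertex off the
triangle's clique has at most one neighbour of `S` in its own clique, and if it has one, a suitable
swap provides a further neighbour outside `S`. -/
theorem exists_isHSuperCut (hd : n = d + K + 1) (hd2 : 2 ≤ d) (hK : 1 ≤ K) :
    ∃ S : Set (NKVertex n (K + 1)), IsHSuperCut (nkStar n (K + 1)) 2 S ∧
      S.ncard ≤ d + K + 2 * (K - 1) := by
  have p : NKVertex n (K + 1) :=
    ⟨Fin.castLE (by omega), Fin.castLE_injective _⟩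
  have hav := card_avail hd {0} p
  rw [card_singleton] at hav
  obtain ⟨A, hA0, hA, hAc⟩ := exists_subsuperset_card_eq (s := {p.1 0}) (t := avail {0} p) (n := 3)
    (by simpa using apply_mem_avail (self_mem_cell {0} p) (by simp)) (by simp) (by omega)
  have hpA : p.1 0 ∈ A := by simpa using hA0
  have havj : ∀ s ∈ avail {0} p, ∀ j, j ≠ 0 → p.1 j ≠ s :=
    fun s hs j hj => mem_avail.1 hs j (by simpa using hj)
  -- `r s` is `p` with first symbol replaced by `s`.
  obtain ⟨r, hr⟩ : ∃ r : Fin n → NKVertex n (K + 1), r = fun s => relabel (p.1 0) s p := ⟨_, rfl⟩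
  have hr0 : ∀ s, (r s).1 0 = s := fun s => by rw [hr]; exact relabel_at s p 0
  have hrj : ∀ s ∈ avail {0} p, ∀ j, j ≠ 0 → (r s).1 j = p.1 j := fun s hs j hj => by
    rw [hr]; exact relabel_of_ne s p hj (havj s hs j hj)
  have hrep : ∀ v : NKVertex n (K + 1), (∀ j, j ≠ 0 → v.1 j = p.1 j) →
      v.1 0 ∈ avail {0} p ∧ v = r (v.1 0) := by
    intro v hv
    have h1 : v.1 0 ∈ avail {0} p := apply_mem_avail
      (mem_cell.2 fun j hj => hv j (by simpa using hj)) (by simp)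
    refine ⟨h1, vext fun j => ?_⟩
    by_cases hj : j = 0
    · subst hj; rw [hr0]
    · rw [hrj _ h1 j hj, hv j hj]
  -- `X` is a triangle inside a clique of unswap-edges and `S` its neighbourhood.
  obtain ⟨X, hXdef⟩ : ∃ X : Finset (NKVertex n (K + 1)), X = A.image r := ⟨_, rfl⟩
  obtain ⟨S, hSdef⟩ : ∃ S : Finset (NKVertex n (K + 1)), S = (avail {0} p \ A).image r ∪
    ((univ.erase 0) ×ˢ A).image (fun a => sw (r a.2) a.1) := ⟨_, rfl⟩
  have memX : ∀ v, v ∈ X ↔ ∃ s ∈ A, r s = v := by simp [hXdef]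
  have memS : ∀ v, v ∈ S ↔ (∃ s ∈ avail {0} p, s ∉ A ∧ v = r s) ∨
      ∃ t, t ≠ 0 ∧ ∃ s ∈ A, v = sw (r s) t := by
    intro v
    simp only [hSdef, mem_union, mem_image, mem_sdiff, mem_product, mem_erase, mem_univ, and_true,
      Prod.exists, and_assoc, eq_comm (a := v)]
    simp only [exists_and_left]
  have hclique : ∀ v : NKVertex n (K + 1), (∀ j, j ≠ 0 → v.1 j = p.1 j) → v ∈ X ∨ v ∈ S := by
    intro v hv
    obtain ⟨h1, h2⟩ := hrep v hv
    by_cases h3 : v.1 0 ∈ A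
    · exact Or.inl ((memX v).2 ⟨_, h3, h2.symm⟩)
    · exact Or.inr ((memS v).2 (Or.inl ⟨_, h1, h3, h2⟩))
  have hXS : ∀ v ∈ X, v ∉ S := by
    intro v hv hvS
    obtain ⟨s, hs, rfl⟩ := (memX v).1 hv
    rcases (memS _).1 hvS with ⟨s', hs', hsA, h⟩ | ⟨t, ht, s', hs', h⟩
    · have := congrArg (fun v : NKVertex n (K + 1) => v.1 0) h
      simp only [hr0] at this
      exact hsA (this ▸ hs)
    · have := congrArg (fun v : NKVertex n (K + 1) => v.1 t) h
      simp only [sw_self, hr0, hrj s (hA hs) t ht] at this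
      exact havj s' (hA hs') t ht this
  have hXadj : ∀ x ∈ X, ∀ v, (nkStar n (K + 1)).Adj x v → v ∉ S → v ∈ X := by
    intro x hx v hxv hvS
    obtain ⟨s, hs, rfl⟩ := (memX x).1 hx
    rcases (adj_iff _ _).1 hxv with ⟨t, ht, rfl⟩ | ⟨_, h⟩
    · exact absurd ((memS _).2 (Or.inr ⟨t, ht, s, hs, rfl⟩)) hvS
    · exact (hclique v fun j hj => by rw [h j hj, hrj s (hA hs) j hj]).resolve_right hvS
  have hXc : #X = 3 := by
    rw [hXdef, card_image_of_injective, hAc]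
    intro s s' h
    rw [← hr0 s, h, hr0]
  refine ⟨↑S, ⟨?_, ?_⟩, ?_⟩
  · intro hcon
    obtain ⟨b, hbA, hb⟩ := exists_mem_ne (show 1 < #A by omega) (p.1 0)
    have ht : (⟨1, by omega⟩ : Fin (K + 1)) ≠ 0 := by simp [Fin.ext_iff]
    generalize (⟨1, by omega⟩ : Fin (K + 1)) = t at ht
    have hyt := relabel_at b p t
    have hy0 := relabel_of_ne b p ht.symm hb.symm
    generalize relabel (p.1 t) b p = y at hyt hy0
    have hrs : ∀ s ∈ avail {0} p, y ≠ r s := by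
      rintro s hs rfl
      rw [hrj s hs t ht] at hyt
      exact havj b (hA hbA) t ht hyt
    have hyX : y ∉ X := by
      intro h
      obtain ⟨s, hs, h⟩ := (memX y).1 h
      exact hrs s (hA hs) h.symm
    have hyS : y ∉ S := by
      intro h
      rcases (memS y).1 h with ⟨s, hs, -, h⟩ | ⟨u, hu, s, hs, rfl⟩
      · exact hrs s hs h
      · rw [sw_zero, hrj s (hA hs) u hu] at hy0
        exact hu (p.2 hy0)
    have hpX : r (p.1 0) ∈ X := (memX _).2 ⟨_, hpA, rfl⟩
    have hreach := hcon.preconnected ⟨r (p.1 0), by simpa using hXS _ hpX⟩ ⟨y, by simpa using hyS⟩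
    rw [SimpleGraph.reachable_iff_reflTransGen] at hreach
    have hall : ∀ w, Relation.ReflTransGen ((nkStar n (K + 1)).induce (↑S : Set _)ᶜ).Adj
        ⟨r (p.1 0), by simpa using hXS _ hpX⟩ w → w.1 ∈ X := by
      intro w hw
      induction hw with
      | refl => exact hpX
      | @tail a b _ hab ih => exact hXadj _ ih _ hab fun h => b.2 (mem_coe.2 h)
    exact hyX (hall _ hreach)
  · intro v hv
    have hvS : v ∉ S := by simpa using hv
    -- It suffices to find two neighbours of `v` outside `S`.
    have suff : ∀ B : Finset (NKVertex n (K + 1)), 2 ≤ #B →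
        (∀ w ∈ B, (nkStar n (K + 1)).Adj v w ∧ w ∉ S) →
        2 ≤ ((nkStar n (K + 1)).neighborSet v ∩ (↑S : Set _)ᶜ).ncard := by
      intro B hB hBS
      rw [← Set.ncard_coe_finset] at hB
      refine hB.trans (Set.ncard_le_ncard ?_ (Set.toFinite _))
      intro w hw
      exact ⟨(hBS w hw).1, by simpa using (hBS w hw).2⟩
    have hcv := card_cell_ge hd (F := {0}) (by simp) v
    rw [card_singleton] at hcv
    have hcadj : ∀ w ∈ cell {0} v, w ≠ v → (nkStar n (K + 1)).Adj v w := fun w hw hwv =>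
      (adj_iff _ _).2 (Or.inr ⟨hwv.symm, fun j hj => mem_cell.1 hw j (by simpa using hj)⟩)
    by_cases hvX : v ∈ X
    · refine suff (X.erase v) (by rw [card_erase_of_mem hvX, hXc]) fun w hw => ?_
      rw [mem_erase] at hw
      refine ⟨hcadj w (mem_cell.2 fun j hj => ?_) hw.1, hXS w hw.2⟩
      have hj : j ≠ 0 := by simpa using hj
      obtain ⟨s, hs, rfl⟩ := (memX w).1 hw.2
      obtain ⟨s', hs', rfl⟩ := (memX v).1 hvX
      rw [hrj s (hA hs) j hj, hrj s' (hA hs') j hj]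
    -- A vertex of `S` in the clique of `v` arises from a swap, and there is at most one.
    have hwS : ∀ w ∈ cell {0} v, w ∈ S → ∃ t, t ≠ 0 ∧ ∃ s ∈ A, w = sw (r s) t := by
      intro w hw hwS
      rcases (memS w).1 hwS with ⟨s, hs, -, rfl⟩ | h
      · exfalso
        refine not_or_intro hvX hvS (hclique v fun j hj => ?_)
        rw [← mem_cell.1 hw j (by simpa using hj), hrj s hs j hj]
      · exact h
    by_cases hex : ∃ w ∈ cell {0} v, w ∈ S
    · obtain ⟨w, hw, hwS'⟩ := hex
      obtain ⟨t, ht, s, hs, hwt⟩ := hwS w hw hwS'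
      have hvt : v.1 t = s := by
        rw [← mem_cell.1 hw t (by simpa using ht), hwt, sw_self, hr0]
      have huniq : ∀ w' ∈ cell {0} v, w' ∈ S → w' = w := by
        intro w' hw' hwS''
        obtain ⟨t', ht', s', hs', hwt'⟩ := hwS w' hw' hwS''
        have hvt' := mem_cell.1 hw' t (by simpa using ht)
        rw [hvt, hwt'] at hvt'
        have htt : t = t' := by
          by_contra htt
          rw [sw_of_ne _ ht htt, hrj s' (hA hs') t ht] at hvt'
          exact havj s (hA hs) t ht hvt'
        subst htt
        rw [sw_self, hr0] at hvt'
        rw [hwt, hwt', hvt']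
      obtain ⟨z, hz, hzv, hzw⟩ : ∃ z ∈ cell {0} v, z ≠ v ∧ z ≠ w := by
        have h1 : 0 < #(((cell {0} v).erase v).erase w) := by
          have h2 := pred_card_le_card_erase (s := cell {0} v) (a := v)
          have h3 := pred_card_le_card_erase (s := (cell {0} v).erase v) (a := w)
          omega
        obtain ⟨z, hz⟩ := card_pos.1 h1
        simp only [mem_erase] at hz
        exact ⟨z, hz.2.2, hz.2.1, hz.1⟩
      have hzs : z ≠ sw v t := by
        intro h
        have h1 := mem_cell.1 hz t (by simpa using ht)
        rw [h, sw_self] at h1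
        exact ht (v.2 h1).symm
      refine suff {z, sw v t} (by rw [card_pair hzs]) fun u hu => ?_
      rw [mem_insert, mem_singleton] at hu
      rcases hu with rfl | rfl
      · exact ⟨hcadj u hz hzv, fun h => hzw (huniq u hz h)⟩
      · refine ⟨adj_sw v ht, fun h => ?_⟩
        rcases (memS _).1 h with ⟨s', hs', -, h⟩ | ⟨t', ht', s', hs', h⟩
        · have h1 := congrArg (fun v : NKVertex n (K + 1) => v.1 t) h
          simp only [sw_self, hrj s' hs' t ht] at h1
          apply hvS
          have : v = w := by
            refine vext fun j => ?_
            by_cases hj : j = 0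
            · subst hj
              rw [h1, hwt, sw_zero, hrj s (hA hs) t ht]
            · rw [mem_cell.1 hw j (by simpa using hj)]
          rwa [this]
        · have h1 := congrArg (fun v : NKVertex n (K + 1) => v.1 0) h
          simp only [sw_zero, hrj s' (hA hs') t' ht', hvt] at h1
          exact havj s (hA hs) t' ht' h1.symm
    · push Not at hex
      refine suff ((cell {0} v).erase v) ?_ fun w hw => ?_
      · have := pred_card_le_card_erase (s := cell {0} v) (a := v)
        omega
      · rw [mem_erase] at hw
        exact ⟨hcadj w hw.2 hw.1, hex w hw.2⟩
  · rw [Set.ncard_coe_finset, hSdef]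
    refine (card_union_le _ _).trans ?_
    have h1 := card_image_le (s := avail {0} p \ A) (f := r)
    have h2 := card_image_le (s := (univ.erase (0 : Fin (K + 1))) ×ˢ A)
      (f := fun a => sw (r a.2) a.1)
    rw [card_sdiff_of_subset hA] at h1
    rw [card_product, card_erase_of_mem (mem_univ _), card_univ, Fintype.card_fin, hAc] at h2
    omega

end NKStarAux

/-- For `2 ≤ k ≤ n−2` and `n ≥ 4`, `κ_s^{(2)}(S_{n,k}) = n + 2k − 5`. -/
theorem hSuperConn_two_nkStar (n k : ℕ) (hk2 : 2 ≤ k) (hkn : k ≤ n - 2) (hn : 4 ≤ n) :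
    hSuperConn (nkStar n k) 2 = n + 2 * k - 5 := by
  obtain ⟨K, rfl⟩ : ∃ K, k = K + 1 := ⟨k - 1, by omega⟩
  obtain ⟨d, rfl⟩ : ∃ d, n = d + K + 1 := ⟨n - K - 1, by omega⟩
  have hval : d + K + 1 + 2 * (K + 1) - 5 = d + K + 2 * (K - 1) := by omega
  rw [hval]
  obtain ⟨S, hS, hSc⟩ :=
    NKStarAux.exists_isHSuperCut (n := d + K + 1) (d := d) (K := K) rfl (by omega) (by omega)
  have hmem : S.ncard ∈ Set.ncard '' {S | IsHSuperCut (nkStar (d + K + 1) (K + 1)) 2 S} :=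
    Set.mem_image_of_mem Set.ncard (show S ∈ {S | IsHSuperCut _ 2 S} from hS)
  unfold hSuperConn
  apply le_antisymm
  · exact (Nat.sInf_le hmem).trans hSc
  · refine le_csInf ⟨_, hmem⟩ ?_
    rintro _ ⟨T, hT, rfl⟩
    exact NKStarAux.le_ncard_of_isHSuperCut rfl (by omega) (by omega) hT
end

section
/- Let 2 ≤ k ≤ n−1 and 0 ≤ h ≤ n−k. Let α be a (k−1)-permutation of {1,…,n}, let V_α be the corresponding clique of S_{n,k} of size n−k+1, and let X ⊆ V_α with |X| = h+1. Then the set S of all neighbors of X in S_{n,k}−X has cardinality exactly (n−k+1−|X|) + |X|(k−1) = n + h(k−2) − 1. -/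
instance (n k : ℕ) : Finite (NKVertex n k) :=
  inferInstanceAs (Finite {p : Fin k → Fin n // Function.Injective p})

/-- The vertex obtained from `x` by exchanging the entries at positions `0` and `i + 1`. -/
def NKVertex.swapAt {n m : ℕ} (x : NKVertex n (m + 1)) (i : Fin m) : NKVertex n (m + 1) :=
  ⟨x.1 ∘ Equiv.swap 0 i.succ, x.2.comp (Equiv.swap 0 i.succ).injective⟩

lemma NKVertex.swapAt_apply_succ_self {n m : ℕ} (x : NKVertex n (m + 1)) (i : Fin m) :
    (x.swapAt i).1 i.succ = x.1 0 := by
  simp [NKVertex.swapAt]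

lemma NKVertex.swapAt_apply_succ_of_ne {n m : ℕ} (x : NKVertex n (m + 1)) {i j : Fin m}
    (hij : i ≠ j) : (x.swapAt j).1 i.succ = x.1 i.succ := by
  have h : Equiv.swap 0 j.succ i.succ = i.succ :=
    Equiv.swap_apply_of_ne_of_ne (Fin.succ_ne_zero i) (fun h => hij (Fin.succ_injective _ h))
  simp [NKVertex.swapAt, h]

lemma NKVertex.swapAt_swapAt {n m : ℕ} (x : NKVertex n (m + 1)) (i : Fin m) :
    (x.swapAt i).swapAt i = x := by
  apply Subtype.ext
  funext j
  simp [NKVertex.swapAt]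

lemma NKVertex.apply_zero_ne_apply_succ {n m : ℕ} (x : NKVertex n (m + 1)) (i : Fin m) :
    x.1 0 ≠ x.1 i.succ :=
  fun h => Fin.succ_ne_zero i (x.2 h).symm

lemma swapRel_iff {n m : ℕ} (x v : NKVertex n (m + 1)) :
    SwapRel x v ↔ ∃ i : Fin m, v = x.swapAt i := by
  constructor
  · rintro ⟨_, i, hi, h⟩
    obtain ⟨j, rfl⟩ := Fin.exists_succ_eq.mpr (fun h0 : i = 0 => hi (by simp [h0]))
    exact ⟨j, Subtype.ext h⟩
  · rintro ⟨i, rfl⟩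
    exact ⟨Nat.succ_pos m, i.succ, by simp, rfl⟩

/-- For an unswap-edge, freshness of the new first symbol just says `v ≠ x`: it differs from the
later entries automatically, since they are shared with `v`. -/
lemma unswapRel_iff {n m : ℕ} (x v : NKVertex n (m + 1)) :
    UnswapRel x v ↔ v ≠ x ∧ ∀ i : Fin m, v.1 i.succ = x.1 i.succ := by
  constructor
  · rintro ⟨_, h, h0⟩
    refine ⟨?_, fun i => h i.succ (by simp)⟩
    rintro rfl
    exact h0 ⟨_, rfl⟩
  · rintro ⟨hne, h⟩
    refine ⟨Nat.succ_pos m, fun j hj => ?_, ?_⟩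
    · obtain ⟨i, rfl⟩ := Fin.exists_succ_eq.mpr (fun h0 : j = 0 => hj (by simp [h0]))
      exact h i
    · rintro ⟨j, hj⟩
      change x.1 j = v.1 0 at hj
      cases j using Fin.cases with
      | zero =>
        refine hne (Subtype.ext (funext fun j => ?_))
        cases j using Fin.cases with
        | zero => exact hj.symm
        | succ i => exact h i
      | succ i => exact v.apply_zero_ne_apply_succ i (by rw [← hj, h i])

lemma nkStar_adj_iff {n m : ℕ} (x v : NKVertex n (m + 1)) :
    (nkStar n (m + 1)).Adj x v ↔
      (∃ i : Fin m, v = x.swapAt i) ∨ (v ≠ x ∧ ∀ i : Fin m, v.1 i.succ = x.1 i.succ) := by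
  rw [nkStar, SimpleGraph.fromRel_adj, swapRel_iff, swapRel_iff, unswapRel_iff, unswapRel_iff]
  constructor
  · rintro ⟨-, (h | h) | ⟨i, rfl⟩ | ⟨hne, h⟩⟩
    · exact Or.inl h
    · exact Or.inr h
    · exact Or.inl ⟨i, (v.swapAt_swapAt i).symm⟩
    · exact Or.inr ⟨hne.symm, fun i => (h i).symm⟩
  · rintro (⟨i, rfl⟩ | h)
    · refine ⟨fun he => x.apply_zero_ne_apply_succ i ?_, Or.inl (Or.inl ⟨i, rfl⟩)⟩
      rw [← x.swapAt_apply_succ_self i, ← he]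
    · exact ⟨h.1.symm, Or.inl (Or.inr h)⟩

/-- A vertex of the clique `V_α` is determined by its first symbol, which may be anything outside
the range of `α`. -/
lemma ncard_clique {n m : ℕ} (α : Fin m → Fin n) (hα : Function.Injective α) :
    {x : NKVertex n (m + 1) | ∀ i : Fin m, x.1 i.succ = α i}.ncard = n - m := by
  have himage : (fun x : NKVertex n (m + 1) => x.1 0) ''
      {x | ∀ i : Fin m, x.1 i.succ = α i} = (Set.range α)ᶜ := by
    ext a
    constructor
    · rintro ⟨x, hx, rfl⟩ ⟨i, hi⟩
      exact x.apply_zero_ne_apply_succ i (by rw [hx i, hi])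
    · intro ha
      exact ⟨⟨Fin.cons a α, Fin.cons_injective_iff.mpr ⟨ha, hα⟩⟩, fun i => by simp, by simp⟩
  rw [← Set.InjOn.ncard_image (f := fun x : NKVertex n (m + 1) => x.1 0), himage,
    Set.ncard_compl, Set.ncard_range_of_injective hα]
  · simp
  · intro x hx y hy hxy
    refine Subtype.ext (funext fun j => ?_)
    cases j using Fin.cases with
    | zero => exact hxy
    | succ i => rw [hx i, hy i]

lemma NKVertex.swapAt_injOn {n m : ℕ} (α : Fin m → Fin n) :
    Set.InjOn (fun p : NKVertex n (m + 1) × Fin m => p.1.swapAt p.2)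
      ({x | ∀ i : Fin m, x.1 i.succ = α i} ×ˢ Set.univ) := by
  rintro ⟨x, i⟩ ⟨hx, -⟩ ⟨y, j⟩ ⟨hy, -⟩ hxy
  change x.swapAt i = y.swapAt j at hxy
  have hij : i = j := by
    by_contra hij
    apply x.apply_zero_ne_apply_succ i
    rw [← x.swapAt_apply_succ_self i, hxy, y.swapAt_apply_succ_of_ne hij]
    exact (hy i).trans (hx i).symm
  subst hij
  rw [← x.swapAt_swapAt i, hxy, y.swapAt_swapAt]

/-- Let `2 ≤ k = m+1 ≤ n−1` and `0 ≤ h ≤ n−k`.  Let `α` be a `(k−1)`-permutation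
of `{1,…,n}`, let `V_α` be the corresponding clique of `S_{n,k}` of size
`n−k+1`, and let `X ⊆ V_α` with `|X| = h+1`.  Then the set `S` of all neighbors
of `X` in `S_{n,k} − X` has cardinality exactly
`(n−k+1−|X|) + |X|(k−1) = n + h(k−2) − 1`. -/
theorem nkStar_neighborhood_card (n m h : ℕ) (hm : 1 ≤ m) (hkn : m + 1 < n)
    (hh : h ≤ n - (m + 1))
    (α : Fin m → Fin n) (hα : Function.Injective α)
    (Vα : Set (NKVertex n (m + 1)))
    (hVα : Vα = {x : NKVertex n (m + 1) | ∀ i : Fin m, x.1 i.succ = α i})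
    (X : Set (NKVertex n (m + 1))) (hXV : X ⊆ Vα) (hXcard : X.ncard = h + 1)
    (S : Set (NKVertex n (m + 1)))
    (hS : S = {v | v ∉ X ∧ ∃ x ∈ X, (nkStar n (m + 1)).Adj x v}) :
    S.ncard = (n - (m + 1) + 1 - X.ncard) + X.ncard * ((m + 1) - 1) ∧
    S.ncard = n + h * ((m + 1) - 2) - 1 := by
  have hSeq : S = (Vα \ X) ∪ (fun p : NKVertex n (m + 1) × Fin m => p.1.swapAt p.2) ''
      (X ×ˢ Set.univ) := by
    subst hS hVα
    ext v
    simp only [Set.mem_ofPred_eq, nkStar_adj_iff]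
    constructor
    · rintro ⟨hvX, x, hxX, ⟨i, rfl⟩ | ⟨-, h⟩⟩
      · exact Or.inr ⟨(x, i), ⟨hxX, trivial⟩, rfl⟩
      · exact Or.inl ⟨fun i => (h i).trans (hXV hxX i), hvX⟩
    · rintro (⟨hv, hvX⟩ | ⟨⟨x, i⟩, ⟨hxX, -⟩, rfl⟩)
      · obtain ⟨x, hxX⟩ : X.Nonempty := Set.nonempty_of_ncard_ne_zero (by omega)
        exact ⟨hvX, x, hxX, Or.inr ⟨fun h => hvX (h ▸ hxX),
          fun i => (hv i).trans (hXV hxX i).symm⟩⟩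
      · refine ⟨fun hmem => x.apply_zero_ne_apply_succ i ?_, x, hxX, Or.inl ⟨i, rfl⟩⟩
        rw [← x.swapAt_apply_succ_self i]
        exact (hXV hmem i).trans (hXV hxX i).symm
  have hdisj : Disjoint (Vα \ X) ((fun p : NKVertex n (m + 1) × Fin m => p.1.swapAt p.2) ''
      (X ×ˢ Set.univ)) := by
    subst hVα
    rw [Set.disjoint_left]
    rintro _ ⟨hv, -⟩ ⟨⟨x, i⟩, ⟨hxX, -⟩, rfl⟩
    apply x.apply_zero_ne_apply_succ i
    rw [← x.swapAt_apply_succ_self i]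
    exact (hv i).trans (hXV hxX i).symm
  have hinj : Set.InjOn (fun p : NKVertex n (m + 1) × Fin m => p.1.swapAt p.2)
      (X ×ˢ Set.univ) :=
    (NKVertex.swapAt_injOn α).mono (Set.prod_mono (hVα ▸ hXV) subset_rfl)
  have hV : Vα.ncard = n - m := hVα ▸ ncard_clique α hα
  have hcard : S.ncard = (n - m - (h + 1)) + (h + 1) * m := by
    rw [hSeq, Set.ncard_union_eq hdisj, Set.ncard_sdiff hXV, hinj.ncard_image,
      Set.ncard_prod, hV, hXcard, Set.ncard_univ, Nat.card_fin]
  rw [hcard, hXcard]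
  obtain ⟨t, rfl⟩ : ∃ t, m = t + 1 := ⟨m - 1, by omega⟩
  have e1 : t + 1 + 1 - 1 = t + 1 := rfl
  have e2 : t + 1 + 1 - 2 = t := rfl
  rw [e1, e2]
  have e3 : (h + 1) * (t + 1) = h * t + h + t + 1 := by ring
  constructor <;> omega
end

section
/- Let 2 ≤ k ≤ n−1 and 0 ≤ h ≤ n−k. Let α be a (k−1)-permutation of {1,…,n}, let V_α be the corresponding clique of S_{n,k}, let X ⊆ V_α with |X| = h+1, and let S be the set of all neighbors of X in S_{n,k}−X. Then every vertex u of S_{n,k} outside X ∪ S has at most one neighbor in S, and hence u has degree at least n−2 ≥ h in S_{n,k}−S; consequently S is an h-super vertex-cut of S_{n,k}. -/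
namespace NKStarCut

variable {n m : ℕ}

instance : Finite (NKVertex n (m + 1)) :=
  inferInstanceAs (Finite {p : Fin (m + 1) → Fin n // Function.Injective p})

/-- Adjacency in `S_{n,k}` as an exchange of symbols: `v` is `u` with the two heads
transposed. -/
lemma nkStar_adj_iff (u v : NKVertex n (m + 1)) :
    (nkStar n (m + 1)).Adj u v ↔
      u.1 0 ≠ v.1 0 ∧ ∀ j, v.1 j = Equiv.swap (u.1 0) (v.1 0) (u.1 j) := by
  have fwd : ∀ p q : NKVertex n (m + 1), SwapRel p q ∨ UnswapRel p q →
      p.1 0 ≠ q.1 0 ∧ ∀ j, q.1 j = Equiv.swap (p.1 0) (q.1 0) (p.1 j) := by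
    rintro p q (⟨hk, i, hi, hq⟩ | ⟨hk, ht, hr⟩)
    · have hi0 : i ≠ 0 := fun e => hi (by simp [e])
      have h0 : q.1 0 = p.1 i := by
        rw [hq]
        exact congrArg p.1 (Equiv.swap_apply_left 0 i)
      refine ⟨fun e => hi0 (p.2 (e.trans h0)).symm, fun j => ?_⟩
      rw [h0, hq]
      exact p.2.map_swap 0 i j
    · have hr0 : ∀ j, p.1 j ≠ q.1 0 := fun j e => hr ⟨j, e⟩
      refine ⟨hr0 0, fun j => ?_⟩
      by_cases hj : j = 0
      · subst hj
        rw [Equiv.swap_apply_left]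
      · rw [Equiv.swap_apply_of_ne_of_ne (fun e => hj (p.2 e)) (hr0 j)]
        exact ht j (fun e => hj (Fin.ext e))
  rw [nkStar, SimpleGraph.fromRel_adj]
  constructor
  · rintro ⟨-, h | h⟩
    · exact fwd u v h
    · obtain ⟨h1, h2⟩ := fwd v u h
      refine ⟨h1.symm, fun j => ?_⟩
      rw [h2 j, Equiv.swap_comm, Equiv.swap_apply_self]
  · rintro ⟨h1, h2⟩
    refine ⟨fun e => h1 (by rw [e]), Or.inl ?_⟩
    by_cases hr : v.1 0 ∈ Set.range u.1
    · obtain ⟨i, hi⟩ := hr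
      have hi0 : i ≠ 0 := fun e => h1 (by rw [← hi, e])
      refine Or.inl ⟨Nat.succ_pos m, i, fun e => hi0 (Fin.ext e), funext fun j => ?_⟩
      rw [h2 j, ← hi]
      exact (u.2.map_swap 0 i j).symm
    · refine Or.inr ⟨Nat.succ_pos m, fun j hj => ?_, hr⟩
      rw [h2 j, Equiv.swap_apply_of_ne_of_ne (fun e => hj (by simp [u.2 e]))
        (fun e => hr ⟨j, e⟩)]

lemma eq_of_adj_of_head_eq {u s t : NKVertex n (m + 1)} (hs : (nkStar n (m + 1)).Adj u s)
    (ht : (nkStar n (m + 1)).Adj u t) (h0 : s.1 0 = t.1 0) : s = t := by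
  rw [nkStar_adj_iff] at hs ht
  refine Subtype.ext (funext fun j => ?_)
  rw [hs.2 j, ht.2 j, h0]

/-- Every symbol other than the head of `u` is the head of a neighbour of `u`. -/
lemma le_ncard_neighborSet (u : NKVertex n (m + 1)) :
    n - 1 ≤ ((nkStar n (m + 1)).neighborSet u).ncard := by
  have hsub : ({u.1 0}ᶜ : Set (Fin n)) ⊆
      (fun v : NKVertex n (m + 1) => v.1 0) '' (nkStar n (m + 1)).neighborSet u := by
    intro c hc
    let v : NKVertex n (m + 1) :=
      ⟨fun j => Equiv.swap (u.1 0) c (u.1 j), (Equiv.injective _).comp u.2⟩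
    have hv0 : v.1 0 = c := Equiv.swap_apply_left _ _
    refine ⟨v, (nkStar_adj_iff u v).2 ⟨?_, fun j => ?_⟩, hv0⟩
    · rw [hv0]
      exact Ne.symm hc
    · rw [hv0]
  calc n - 1 = ({u.1 0}ᶜ : Set (Fin n)).ncard := by
        rw [Set.ncard_compl, Set.ncard_singleton, Nat.card_eq_fintype_card, Fintype.card_fin]
    _ ≤ _ := Set.ncard_le_ncard hsub (Set.toFinite _)
    _ ≤ _ := Set.ncard_image_le (Set.toFinite _)

lemma adj_of_tail_eq {x y : NKVertex n (m + 1)} (h : ∀ i : Fin m, x.1 i.succ = y.1 i.succ)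
    (hne : x ≠ y) : (nkStar n (m + 1)).Adj x y := by
  have h0 : x.1 0 ≠ y.1 0 := by
    intro e
    exact hne (Subtype.ext (funext fun j => Fin.cases e h j))
  rw [nkStar_adj_iff]
  refine ⟨h0, fun j => ?_⟩
  refine Fin.cases (by simp) (fun i => ?_) j
  rw [Equiv.swap_apply_of_ne_of_ne (fun e => Fin.succ_ne_zero i (x.2 e))
    (fun e => Fin.succ_ne_zero i (y.2 ((h i).symm.trans e))), h i]

/-- The shape of a vertex `u` outside `V_α` having a neighbour `s` that is adjacent to `x ∈ X`:
its tail has a unique symbol outside `range α`, and this symbol together with its position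
determines the head of `s`. -/
lemma head_of_neighbor {α : Fin m → Fin n} (hα : Function.Injective α)
    {X : Set (NKVertex n (m + 1))} (hX : ∀ x ∈ X, ∀ i : Fin m, x.1 i.succ = α i)
    {x s u : NKVertex n (m + 1)} (hx : x ∈ X) (hsX : s ∉ X) (huX : u ∉ X)
    (huV : ¬ ∀ i : Fin m, u.1 i.succ = α i)
    (hxs : (nkStar n (m + 1)).Adj x s) (hus : (nkStar n (m + 1)).Adj u s) :
    ∃ i : Fin m, u.1 i.succ ∉ Set.range α ∧ (∀ j, j ≠ i → u.1 j.succ ∈ Set.range α) ∧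
      (((¬ ∃ y ∈ X, y.1 0 = u.1 i.succ) ∧ s.1 0 = u.1 i.succ) ∨
        ((∃ y ∈ X, y.1 0 = u.1 i.succ) ∧ s.1 0 = α i)) := by
  have hus' := (nkStar_adj_iff _ _).1 hus.symm
  have hxs' := (nkStar_adj_iff _ _).1 hxs
  have hx0 : ∀ i, x.1 0 ≠ α i := fun i e =>
    Fin.succ_ne_zero i (x.2 ((hX x hx i).trans e.symm))
  by_cases hsV : ∀ i : Fin m, s.1 i.succ = α i
  · have hs0 : ∀ i, s.1 0 ≠ α i := fun i e =>
      Fin.succ_ne_zero i (s.2 ((hsV i).trans e.symm))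
    have hu : ∀ j : Fin m, u.1 j.succ = Equiv.swap (s.1 0) (u.1 0) (α j) := fun j => by
      rw [hus'.2 j.succ, hsV j]
    -- the head of `u` occurs in `α`, as otherwise `u` would have tail `α`
    obtain ⟨i, hi⟩ : ∃ i, u.1 0 = α i := by
      by_contra! hc
      exact huV fun j => by
        rw [hu j, Equiv.swap_apply_of_ne_of_ne (hs0 j).symm (hc j).symm]
    have hui : u.1 i.succ = s.1 0 := by rw [hu i, hi, Equiv.swap_apply_right]
    refine ⟨i, ?_, fun j hj => ⟨j, ?_⟩, Or.inl ⟨?_, hui.symm⟩⟩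
    · rintro ⟨j, hj⟩
      exact hs0 j (by rw [← hui, hj])
    · rw [hu j, hi, Equiv.swap_apply_of_ne_of_ne (hs0 j).symm (fun e => hj (hα e))]
    · rintro ⟨y, hy, hy0⟩
      apply hsX
      have : s = y := Subtype.ext (funext fun j =>
        Fin.cases (by rw [hy0, hui]) (fun l => by rw [hsV l, hX y hy l]) j)
      rwa [this]
  · have hs : ∀ j : Fin m, s.1 j.succ = Equiv.swap (x.1 0) (s.1 0) (α j) := fun j => by
      rw [hxs'.2 j.succ, hX x hx j]
    obtain ⟨i, hi⟩ : ∃ i, s.1 0 = α i := by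
      by_contra! hc
      exact hsV fun j => by
        rw [hs j, Equiv.swap_apply_of_ne_of_ne (hx0 j).symm (hc j).symm]
    have hsi : s.1 i.succ = x.1 0 := by rw [hs i, hi, Equiv.swap_apply_right]
    have hsj : ∀ j, j ≠ i → s.1 j.succ = α j := fun j hj => by
      rw [hs j, hi, Equiv.swap_apply_of_ne_of_ne (hx0 j).symm (fun e => hj (hα e))]
    -- `x` is the only neighbour of `s` with its head, and `x ∈ X`
    have hu0 : u.1 0 ≠ x.1 0 := fun e =>
      huX (by rw [eq_of_adj_of_head_eq hus.symm hxs.symm e]; exact hx)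
    have hui : u.1 i.succ = x.1 0 := by
      rw [hus'.2 i.succ, hsi, Equiv.swap_apply_of_ne_of_ne (by rw [hi]; exact hx0 i) hu0.symm]
    refine ⟨i, ?_, fun j hj => ?_, Or.inr ⟨⟨x, hx, hui.symm⟩, hi⟩⟩
    · rintro ⟨j, hj⟩
      exact hx0 j (by rw [← hui, hj])
    · rw [hus'.2 j.succ, hsj j hj]
      by_cases hc : α j = u.1 0
      · exact ⟨i, by rw [hc, Equiv.swap_apply_right, hi]⟩
      · exact ⟨j, by rw [Equiv.swap_apply_of_ne_of_ne (fun e => hj (hα (e.trans hi))) hc]⟩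

/-- A vertex outside `X` that is adjacent to no member of `X`; it differs from `x` in the head
and in one entry of the tail, so it even lies outside `V_α`. -/
lemma exists_far_vertex (hm : 1 ≤ m) (hkn : m + 1 < n) {α : Fin m → Fin n}
    {X : Set (NKVertex n (m + 1))} (hX : ∀ x ∈ X, ∀ i : Fin m, x.1 i.succ = α i)
    {x : NKVertex n (m + 1)} (hx : x ∈ X) :
    ∃ u : NKVertex n (m + 1), u ∉ X ∧ ∀ y ∈ X, ¬ (nkStar n (m + 1)).Adj y u := by
  obtain ⟨c, hc⟩ : ∃ c, c ∉ Set.range x.1 := by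
    by_contra! hc
    have := Fintype.card_le_of_surjective x.1 hc
    simp only [Fintype.card_fin] at this
    omega
  have hcx : ∀ j, x.1 j ≠ c := fun j e => hc ⟨j, e⟩
  let i : Fin m := ⟨0, hm⟩
  have hi0 : i.succ ≠ 0 := Fin.succ_ne_zero i
  have hx0 : ∀ l, x.1 0 ≠ α l := fun l e =>
    Fin.succ_ne_zero l (x.2 ((hX x hx l).trans e.symm))
  -- first exchange head and `i`-th tail entry, then replace the new head `α i` by `c`
  let u : NKVertex n (m + 1) :=
    ⟨fun j => Equiv.swap (x.1 i.succ) c (x.1 (Equiv.swap 0 i.succ j)),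
      (Equiv.injective _).comp (x.2.comp (Equiv.injective _))⟩
  have hu0 : u.1 0 = c := by simp [u]
  have hui : u.1 i.succ = x.1 0 := by
    simp only [u, Equiv.swap_apply_right]
    exact Equiv.swap_apply_of_ne_of_ne (fun e => hi0 (x.2 e).symm) (hcx 0)
  refine ⟨u, fun h => hx0 i (by rw [← hui, hX u h i]), fun y hy hadj => ?_⟩
  have h2 := ((nkStar_adj_iff _ _).1 hadj).2 i.succ
  rw [hui, hX y hy i, hu0] at h2
  have hic : α i ≠ c := by rw [← hX x hx i]; exact hcx _
  have hiy : α i ≠ y.1 0 := by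
    rw [← hX y hy i]
    exact fun e => hi0 (y.2 e)
  rw [Equiv.swap_apply_of_ne_of_ne hiy hic] at h2
  exact hx0 i h2

end NKStarCut

open NKStarCut in
/-- Let `2 ≤ k = m+1 ≤ n−1` and `0 ≤ h ≤ n−k`.  Let `α` be a `(k−1)`-permutation
of `{1,…,n}`, let `V_α` be the corresponding clique of `S_{n,k}`, let `X ⊆ V_α`
with `|X| = h+1`, and let `S` be the set of all neighbors of `X` in
`S_{n,k} − X`.  Then every vertex `u` outside `X ∪ S` has at most one neighbor
in `S`, hence degree at least `n − 2 ≥ h` in `S_{n,k} − S`; consequently `S` is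
an `h`-super vertex-cut of `S_{n,k}`. -/
theorem nkStar_neighborhood_is_cut (n m h : ℕ) (hm : 1 ≤ m) (hkn : m + 1 < n)
    (hh : h ≤ n - (m + 1))
    (α : Fin m → Fin n) (hα : Function.Injective α)
    (Vα : Set (NKVertex n (m + 1)))
    (hVα : Vα = {x : NKVertex n (m + 1) | ∀ i : Fin m, x.1 i.succ = α i})
    (X : Set (NKVertex n (m + 1))) (hXV : X ⊆ Vα) (hXcard : X.ncard = h + 1)
    (S : Set (NKVertex n (m + 1)))
    (hS : S = {v | v ∉ X ∧ ∃ x ∈ X, (nkStar n (m + 1)).Adj x v}) :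
    (∀ u : NKVertex n (m + 1), u ∉ X → u ∉ S →
      (S ∩ (nkStar n (m + 1)).neighborSet u).ncard ≤ 1 ∧
      n - 2 ≤ ((nkStar n (m + 1)).neighborSet u ∩ Sᶜ).ncard) ∧
    h ≤ n - 2 ∧
    IsHSuperCut (nkStar n (m + 1)) h S := by
  have hX : ∀ x ∈ X, ∀ i : Fin m, x.1 i.succ = α i := fun x hx => by
    have := hXV hx
    rw [hVα] at this
    exact this
  obtain ⟨x₀, hx₀⟩ : X.Nonempty := by
    rw [← Set.ncard_pos (Set.toFinite X)]
    omega
  have hmain : ∀ u : NKVertex n (m + 1), u ∉ X → u ∉ S →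
      (S ∩ (nkStar n (m + 1)).neighborSet u).ncard ≤ 1 ∧
      n - 2 ≤ ((nkStar n (m + 1)).neighborSet u ∩ Sᶜ).ncard := by
    intro u huX huS
    have huV : ¬ ∀ i : Fin m, u.1 i.succ = α i := by
      intro h
      apply huS
      rw [hS]
      exact ⟨huX, x₀, hx₀, adj_of_tail_eq (fun i => (hX x₀ hx₀ i).trans (h i).symm)
        (fun e => huX (e ▸ hx₀))⟩
    have h1 : (S ∩ (nkStar n (m + 1)).neighborSet u).ncard ≤ 1 := by
      rw [Set.ncard_le_one (Set.toFinite _)]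
      rintro s ⟨hsS, hus⟩ t ⟨htS, hut⟩
      rw [hS] at hsS htS
      obtain ⟨hsX, x, hx, hxs⟩ := hsS
      obtain ⟨htX, y, hy, hyt⟩ := htS
      obtain ⟨i, hi, -, hi'⟩ := head_of_neighbor hα hX hx hsX huX huV hxs hus
      obtain ⟨j, -, hj, hj'⟩ := head_of_neighbor hα hX hy htX huX huV hyt hut
      have hij : i = j := by
        by_contra hne
        exact hi (hj i hne)
      subst hij
      refine eq_of_adj_of_head_eq hus hut ?_
      rcases hi' with ⟨a, b⟩ | ⟨a, b⟩ <;> rcases hj' with ⟨c, d⟩ | ⟨c, d⟩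
      · rw [b, d]
      · exact absurd c a
      · exact absurd a c
      · rw [b, d]
    refine ⟨h1, ?_⟩
    have h2 := le_ncard_neighborSet u
    have h3 := Set.ncard_inter_add_ncard_sdiff_eq_ncard
      ((nkStar n (m + 1)).neighborSet u) S (Set.toFinite _)
    rw [Set.inter_comm, Set.sdiff_eq] at h3
    omega
  refine ⟨hmain, by omega, ?_, ?_⟩
  · intro hconn
    obtain ⟨u, huX, hu⟩ := exists_far_vertex hm hkn hX hx₀
    have huS : u ∈ Sᶜ := by
      rw [hS]
      rintro ⟨-, y, hy, hyu⟩
      exact hu y hy hyu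
    have hx₀S : x₀ ∈ Sᶜ := by
      rw [hS]
      exact fun h => h.1 hx₀
    -- membership in `X` propagates along walks that avoid `S`
    obtain ⟨w⟩ := hconn.preconnected ⟨x₀, hx₀S⟩ ⟨u, huS⟩
    have key : ∀ (a b : (Sᶜ : Set (NKVertex n (m + 1)))),
        ((nkStar n (m + 1)).induce Sᶜ).Walk a b → a.1 ∈ X → b.1 ∈ X := by
      intro a b w
      induction w with
      | nil => exact id
      | @cons a b c hab _ ih =>
        intro ha
        apply ih
        by_contra hb
        exact b.2 (hS.symm.subset ⟨hb, a.1, ha, hab⟩)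
    exact huX (key _ _ w hx₀)
  · intro v hv
    by_cases hvX : v ∈ X
    · have hsub : X \ {v} ⊆ (nkStar n (m + 1)).neighborSet v ∩ Sᶜ := by
        rintro y ⟨hy, hyv⟩
        refine ⟨adj_of_tail_eq (fun i => (hX v hvX i).trans (hX y hy i).symm)
          (fun e => hyv e.symm), ?_⟩
        rw [hS]
        exact fun h => h.1 hy
      have h1 := Set.ncard_le_ncard hsub (Set.toFinite _)
      rw [Set.ncard_sdiff_singleton_of_mem hvX, hXcard] at h1
      exact h1
    · have := (hmain v hvX hv).2
      omega
end
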